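/- arXiv:2511.03606 — 3 statements merged into one kernel-verified Lean document; each statement's English description precedes it below -/
import Mathlib

section
/- Fix an integer n ≥ 1. Suppose the noises satisfy the Bernstein condition with parameters (σ_t, B): E[|ε_t|^m | F_{t-1}] ≤ (1/2) m! B^{m−2} σ_t² for all m ≥ 2 and all 1 ≤ t ≤ n, with σ_t F_{t-1}-measurable, and suppose Σ_{i=1}^n σ_i² ‖G_i‖² ≤ C_n² almost surely, where C_n ≥ 0 is deterministic. Then for every r ≥ 0, P( sup_{1 ≤ t ≤ n} ‖(ρI + V_t)^{-1/2} M_t‖ ≥ r ) ≤ 2 exp( − r² / (2 (C_n² + B r)) ). -/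
open MeasureTheory Filter Real
open scoped RealInnerProductSpace

noncomputable def outerProd {H : Type*} [NormedAddCommGroup H] [InnerProductSpace ℝ H]
    (x : H) : H →L[ℝ] H :=
  (innerSL ℝ x).smulRight x

lemma cosh_sqrt_conv (x y θ : ℝ) (hx : 0 ≤ x) (hy : 0 ≤ y) (h0 : 0 ≤ θ) (h1 : θ ≤ 1) (z : ℝ)
    (hz : z^2 = θ * x^2 + (1-θ) * y^2) : cosh z ≤ θ * cosh x + (1-θ) * cosh y := by
  have H := ((Real.hasSum_cosh x).mul_left θ).add ((Real.hasSum_cosh y).mul_left (1-θ))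
  refine hasSum_le (fun k => ?_) (Real.hasSum_cosh z) H
  rw [← mul_div_assoc, ← mul_div_assoc, ← add_div]
  gcongr
  rw [pow_mul, pow_mul, pow_mul, hz]
  have := (convexOn_pow k).2 (x := x^2) (y := y^2) (by simp; positivity) (by simp; positivity) h0 (by linarith : 0 ≤ 1-θ) (by ring)
  simpa using this

lemma key_scalar (a b c y : ℝ) (ha : 0 ≤ a) (hb : 0 ≤ b) (hc : |c| ≤ a * b)
    (hy : y^2 = a^2 + 2*c + b^2) :
    cosh y ≤ cosh a * (1 + (exp b - 1 - b)) + c * (sinh a / a) := by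
  have hch := Real.one_le_cosh a
  have hsb : b ≤ sinh b := Real.self_le_sinh_iff.2 hb
  have hsa : 0 ≤ sinh a := Real.sinh_nonneg_iff.2 ha
  have hsc : sinh a ≤ cosh a := (Real.sinh_lt_cosh a).le
  have heb : exp b = cosh b + sinh b := (Real.cosh_add_sinh b).symm
  rcases (mul_nonneg ha hb).eq_or_lt with h | h
  · have hc0 : c = 0 := by rw [← h] at hc; exact abs_nonpos_iff.1 hc
    subst hc0
    rcases mul_eq_zero.1 h.symm with h | h
    · subst h
      have : |y| = |b| := by rw [← sq_eq_sq_iff_abs_eq_abs]; simpa using hy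
      rw [← Real.cosh_abs y, this, Real.cosh_abs, heb]; simp; linarith
    · subst h
      have : |y| = |a| := by rw [← sq_eq_sq_iff_abs_eq_abs]; simpa using hy
      rw [← Real.cosh_abs y, this, Real.cosh_abs]; simp
  · have ha' : 0 < a := by
      rcases ha.eq_or_lt with h' | h'
      · simp [← h'] at h
      · exact h'
    have hb' : 0 < b := by
      rcases hb.eq_or_lt with h' | h'
      · simp [← h'] at h
      · exact h'
    have ⟨hl, hu⟩ := abs_le.1 hc
    set θ := (1 + c/(a*b))/2 with hθ
    have hcθ : c = (2*θ-1)*(a*b) := by rw [hθ]; field_simp; ring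
    have h1 : c/(a*b) ≤ 1 := (div_le_one h).2 hu
    have h2 : -1 ≤ c/(a*b) := by rw [le_div_iff₀ h]; linarith
    have hθ0 : 0 ≤ θ := by rw [hθ]; linarith
    have hθ1 : θ ≤ 1 := by rw [hθ]; linarith
    have := cosh_sqrt_conv (a+b) |a-b| θ (by linarith) (abs_nonneg _) hθ0 hθ1 y (by
      rw [hy, sq_abs, hcθ]; ring)
    rw [Real.cosh_abs, Real.cosh_add, Real.cosh_sub] at this
    have e : c * (sinh a / a) = (2*θ-1) * b * sinh a := by rw [hcθ]; field_simp
    rw [e, heb]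
    have hd : 0 ≤ sinh b - b := by linarith
    nlinarith [mul_nonneg (sub_nonneg.2 hsc) hd, mul_nonneg (mul_nonneg hsa hd) (sub_nonneg.2 hθ1), mul_nonneg (mul_nonneg hsa hd) hθ0]

lemma cond_bound {Ω : Type*} {m m0 : MeasurableSpace Ω} {μ : Measure Ω} [IsProbabilityMeasure μ]
    (hm : m ≤ m0) (f h b : Ω → ℝ) (K : ℝ) (hf : StronglyMeasurable[m] f) (hf0 : ∀ ω, 0 ≤ f ω)
    (hfK : ∀ ω, f ω ≤ K) (hh : Integrable h μ) (hh0 : ∀ ω, 0 ≤ h ω) (hb : μ[h | m] ≤ᵐ[μ] b) :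
    ∫⁻ ω, ENNReal.ofReal (f ω * h ω) ∂μ ≤ ∫⁻ ω, ENNReal.ofReal (f ω * b ω) ∂μ := by
  have hbd : ∀ᵐ ω ∂μ, ‖f ω‖ ≤ K := Eventually.of_forall fun ω => by
    rw [Real.norm_eq_abs, abs_of_nonneg (hf0 ω)]; exact hfK ω
  have hfa : AEStronglyMeasurable f μ := (hf.mono hm).aestronglyMeasurable
  have i1 : Integrable (fun ω => f ω * h ω) μ := hh.bdd_mul hfa hbd
  have i2 : Integrable (fun ω => f ω * (μ[h | m]) ω) μ := integrable_condExp.bdd_mul hfa hbd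
  have e := condExp_stronglyMeasurable_mul_of_bound hm hf hh K hbd
  have hpos : 0 ≤ᵐ[μ] μ[h | m] := condExp_nonneg (Eventually.of_forall hh0)
  rw [← ofReal_integral_eq_lintegral_ofReal i1
    (Eventually.of_forall fun ω => mul_nonneg (hf0 ω) (hh0 ω))]
  have e2 : ∫ ω, f ω * h ω ∂μ = ∫ ω, f ω * (μ[h | m]) ω ∂μ := by
    have := integral_condExp (μ := μ) (f := f * h) hm
    rw [integral_congr_ae e] at this
    exact this.symm
  rw [e2, ofReal_integral_eq_lintegral_ofReal i2]
  · apply lintegral_mono_ae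
    filter_upwards [hb] with ω hω
    exact ENNReal.ofReal_le_ofReal (mul_le_mul_of_nonneg_left hω (hf0 ω))
  · filter_upwards [hpos] with ω hω
    exact mul_nonneg (hf0 ω) hω

lemma hasSum_psi (x : ℝ) :
    HasSum (fun k : ℕ => x ^ (k+2) / (Nat.factorial (k+2) : ℝ)) (exp x - 1 - x) := by
  rw [hasSum_nat_add_iff (f := fun k : ℕ => x ^ k / (Nat.factorial k : ℝ)) 2]
  have := NormedSpace.expSeries_div_hasSum_exp (𝔸 := ℝ) x
  rw [← Real.exp_eq_exp_ℝ] at this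
  have e : exp x - 1 - x + ∑ i ∈ Finset.range 2, x ^ i / (Nat.factorial i : ℝ) = exp x := by
    simp [Finset.sum_range_succ]
  rw [e]; exact this

lemma one_step {Ω : Type*} {m m0 : MeasurableSpace Ω} {μ : Measure Ω} [IsProbabilityMeasure μ]
    (hm : m ≤ m0) (ε σ w g L Z Z' : Ω → ℝ) (B l K : ℝ) (hB : 0 < B) (hl : 0 < l) (hlB : l * B < 1)
    (hεint : Integrable ε μ) (hε0 : μ[ε | m] =ᵐ[μ] 0)
    (hmom : ∀ k : ℕ, Integrable (fun ω => |ε ω| ^ k) μ)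
    (hbern : ∀ k : ℕ, 2 ≤ k → μ[fun ω => |ε ω| ^ k | m] ≤ᵐ[μ]
        fun ω => (1 / 2) * (Nat.factorial k : ℝ) * B ^ (k - 2) * σ ω ^ 2)
    (hσ : StronglyMeasurable[m] σ) (hw : StronglyMeasurable[m] w) (hg : StronglyMeasurable[m] g)
    (hL : StronglyMeasurable[m] L)
    (hw0 : ∀ ω, 0 ≤ w ω) (hwK : ∀ ω, w ω ≤ K) (hg0 : ∀ ω, 0 ≤ g ω) (hg1 : ∀ ω, g ω ≤ 1)
    (hLK : ∀ ω, |L ω| ≤ K)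
    (hZ0 : ∀ ω, 0 ≤ Z ω)
    (hZ : ∀ ω, Z ω ≤ w ω * (1 + (exp (l * (|ε ω| * g ω)) - 1 - l * (|ε ω| * g ω))) + L ω * ε ω)
    (hZ' : ∀ ω, w ω * (1 + l^2 / (2 * (1 - l * B)) * (σ ω ^ 2 * g ω ^ 2)) ≤ Z' ω)
    (hZ'K : ∀ ω, Z' ω ≤ K) :
    ∫⁻ ω, ENNReal.ofReal (Z ω) ∂μ ≤ ∫⁻ ω, ENNReal.ofReal (Z' ω) ∂μ := by
  have hlB' : 0 < 1 - l * B := by linarith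
  set ψ : Ω → ℝ := fun ω => exp (l * (|ε ω| * g ω)) - 1 - l * (|ε ω| * g ω) with hψ
  have hx0 : ∀ ω, 0 ≤ l * (|ε ω| * g ω) := fun ω => by have := hg0 ω; positivity
  have hψ0 : ∀ ω, 0 ≤ ψ ω := fun ω => by
    have := Real.add_one_le_exp (l * (|ε ω| * g ω)); simp only [hψ]; linarith
  have hεm : AEMeasurable ε μ := hεint.1.aemeasurable
  have hgm : Measurable g := (hg.mono hm).measurable
  have hwm : Measurable w := (hw.mono hm).measurable
  have hσm : Measurable σ := (hσ.mono hm).measurable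
  have hψm : AEMeasurable ψ μ := by simp only [hψ]; fun_prop
  have hK0 : ∀ ω : Ω, 0 ≤ K := fun ω => (hw0 ω).trans (hwK ω)
  -- the psi term
  have h1 : ∫⁻ ω, ENNReal.ofReal (w ω * ψ ω) ∂μ ≤
      ∫⁻ ω, ENNReal.ofReal (w ω * (l^2 / (2 * (1 - l * B)) * (σ ω ^ 2 * g ω ^ 2))) ∂μ := by
    have hs : ∀ ω, ENNReal.ofReal (w ω * ψ ω) = ∑' k : ℕ, ENNReal.ofReal
        ((w ω * (l ^ (k+2) * g ω ^ (k+2) / (Nat.factorial (k+2) : ℝ))) * |ε ω| ^ (k+2)) := by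
      intro ω
      have := (hasSum_psi (l * (|ε ω| * g ω))).mul_left (w ω)
      have hrw : (fun k : ℕ => w ω * ((l * (|ε ω| * g ω)) ^ (k+2) / (Nat.factorial (k+2) : ℝ))) =
        fun k : ℕ => ((w ω * (l ^ (k+2) * g ω ^ (k+2) / (Nat.factorial (k+2) : ℝ))) * |ε ω| ^ (k+2)) := by
        ext k; rw [mul_pow, mul_pow]; ring
      rw [hrw] at this
      rw [← ENNReal.ofReal_tsum_of_nonneg _ this.summable, this.tsum_eq]
      intro k
      have := hg0 ω; have := hw0 ω; positivity
    simp_rw [hs]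
    rw [lintegral_tsum (fun k => by fun_prop)]
    have hterm : ∀ k : ℕ, ∫⁻ ω, ENNReal.ofReal
        ((w ω * (l ^ (k+2) * g ω ^ (k+2) / (Nat.factorial (k+2) : ℝ))) * |ε ω| ^ (k+2)) ∂μ ≤
        ∫⁻ ω, ENNReal.ofReal (w ω * (l^2/2 * (σ ω ^ 2 * g ω ^ 2)) * (l*B)^k) ∂μ := by
      intro k
      refine (cond_bound hm _ _ _ (K * l^(k+2)) ?_ ?_ ?_ (hmom (k+2)) (fun ω => by positivity)
        (hbern (k+2) (by omega))).trans ?_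
      · exact hw.mul (((hg.pow (k+2)).const_mul (l^(k+2))).div stronglyMeasurable_const)
      · intro ω; have := hg0 ω; have := hw0 ω; positivity
      · intro ω
        have h1 := hg0 ω; have h2 := hw0 ω
        have h3 : g ω ^ (k+2) ≤ 1 := pow_le_one₀ h1 (hg1 ω)
        have h4 : (1:ℝ) ≤ (Nat.factorial (k+2) : ℝ) := by exact_mod_cast Nat.factorial_pos _
        have : l ^ (k+2) * g ω ^ (k+2) / (Nat.factorial (k+2) : ℝ) ≤ l ^ (k+2) := by
          apply div_le_of_le_mul₀ (by positivity) (by positivity)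
          exact mul_le_mul_of_nonneg_left (h3.trans h4) (by positivity)
        exact mul_le_mul (hwK ω) this (by positivity) (hK0 ω)
      · apply lintegral_mono
        intro ω
        apply ENNReal.ofReal_le_ofReal
        have h1 := hg0 ω; have h2 := hw0 ω
        have h3 : g ω ^ (k+2) ≤ g ω ^ 2 := pow_le_pow_of_le_one h1 (hg1 ω) (by omega)
        have : (Nat.factorial (k+2) : ℝ) ≠ 0 := by positivity
        calc _ = w ω * (l^2/2 * (σ ω ^ 2 * g ω ^ (k+2))) * (l*B)^k := by
              rw [Nat.add_sub_cancel, mul_pow, pow_add l]; field_simp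
          _ ≤ _ := by gcongr
    refine (ENNReal.tsum_le_tsum hterm).trans ?_
    rw [← lintegral_tsum (fun k => by fun_prop)]
    apply lintegral_mono
    intro ω
    have hgeo := (hasSum_geometric_of_lt_one (by positivity : 0 ≤ l * B) hlB).mul_left
      (w ω * (l^2/2 * (σ ω ^ 2 * g ω ^ 2)))
    show ∑' k, _ ≤ _
    rw [← ENNReal.ofReal_tsum_of_nonneg _ hgeo.summable, hgeo.tsum_eq]
    · apply ENNReal.ofReal_le_ofReal
      apply le_of_eq; field_simp
    · intro k; have := hw0 ω; positivity
  -- bound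
  have hκ : 0 ≤ l^2 / (2 * (1 - l * B)) := by positivity
  have h2 : ∫⁻ ω, ENNReal.ofReal (w ω * (1 + ψ ω)) ∂μ ≤ ∫⁻ ω, ENNReal.ofReal (Z' ω) ∂μ := by
    calc ∫⁻ ω, ENNReal.ofReal (w ω * (1 + ψ ω)) ∂μ
        = ∫⁻ ω, (ENNReal.ofReal (w ω) + ENNReal.ofReal (w ω * ψ ω)) ∂μ := by
          congr 1; ext ω
          rw [mul_add, mul_one, ENNReal.ofReal_add (hw0 ω) (mul_nonneg (hw0 ω) (hψ0 ω))]
      _ = ∫⁻ ω, ENNReal.ofReal (w ω) ∂μ + ∫⁻ ω, ENNReal.ofReal (w ω * ψ ω) ∂μ :=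
          lintegral_add_left (by fun_prop) _
      _ ≤ ∫⁻ ω, ENNReal.ofReal (w ω) ∂μ + _ := by gcongr
      _ = ∫⁻ ω, (ENNReal.ofReal (w ω) + ENNReal.ofReal (w ω * (l^2 / (2 * (1 - l * B)) * (σ ω ^ 2 * g ω ^ 2)))) ∂μ :=
          (lintegral_add_left (by fun_prop) _).symm
      _ ≤ _ := by
          apply lintegral_mono
          intro ω
          have := hw0 ω
          simp only
          rw [← ENNReal.ofReal_add (hw0 ω) (by positivity)]
          apply ENNReal.ofReal_le_ofReal
          have := hZ' ω
          linarith
  have hfin : ∫⁻ ω, ENNReal.ofReal (w ω * (1 + ψ ω)) ∂μ < ⊤ := by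
    refine h2.trans_lt ?_
    calc ∫⁻ ω, ENNReal.ofReal (Z' ω) ∂μ ≤ ∫⁻ ω, ENNReal.ofReal K ∂μ :=
          lintegral_mono fun ω => ENNReal.ofReal_le_ofReal (hZ'K ω)
      _ < ⊤ := by simp
  have hnn : ∀ ω, 0 ≤ w ω * (1 + ψ ω) := fun ω => by
    have := hw0 ω; have := hψ0 ω; positivity
  have i1 : Integrable (fun ω => w ω * (1 + ψ ω)) μ := by
    refine ⟨(by fun_prop : AEMeasurable _ μ).aestronglyMeasurable, ?_⟩
    rw [hasFiniteIntegral_iff_ofReal (Eventually.of_forall hnn)]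
    exact hfin
  have hLb : ∀ᵐ ω ∂μ, ‖L ω‖ ≤ K := Eventually.of_forall hLK
  have i2 : Integrable (fun ω => L ω * ε ω) μ :=
    hεint.bdd_mul (hL.mono hm).aestronglyMeasurable hLb
  have e2 : ∫ ω, L ω * ε ω ∂μ = 0 := by
    have := integral_condExp (μ := μ) (f := L * ε) hm
    rw [integral_congr_ae (condExp_stronglyMeasurable_mul_of_bound hm hL hεint K hLb)] at this
    have h0 : L * μ[ε | m] =ᵐ[μ] 0 := by
      filter_upwards [hε0] with ω hω
      simp [hω]
    rw [integral_congr_ae h0] at this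
    simpa using this.symm
  calc ∫⁻ ω, ENNReal.ofReal (Z ω) ∂μ
      ≤ ∫⁻ ω, ENNReal.ofReal (w ω * (1 + ψ ω) + L ω * ε ω) ∂μ :=
        lintegral_mono fun ω => ENNReal.ofReal_le_ofReal (hZ ω)
    _ = ENNReal.ofReal (∫ ω, (w ω * (1 + ψ ω) + L ω * ε ω) ∂μ) :=
        (ofReal_integral_eq_lintegral_ofReal (i1.add i2)
          (Eventually.of_forall fun ω => (hZ0 ω).trans (hZ ω))).symm
    _ = ENNReal.ofReal (∫ ω, w ω * (1 + ψ ω) ∂μ) := by rw [integral_add i1 i2, e2, add_zero]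
    _ = ∫⁻ ω, ENNReal.ofReal (w ω * (1 + ψ ω)) ∂μ :=
        ofReal_integral_eq_lintegral_ofReal i1 (Eventually.of_forall hnn)
    _ ≤ _ := h2

lemma max_ineq {Ω : Type*} {m0 : MeasurableSpace Ω} {μ : Measure Ω} [IsProbabilityMeasure μ]
    (ℱ : Filtration ℕ m0) (ε σ a g c Y : ℕ → Ω → ℝ)
    (hεint : ∀ t, 1 ≤ t → Integrable (ε t) μ)
    (hε0 : ∀ t, 1 ≤ t → μ[ε t | ℱ (t - 1)] =ᵐ[μ] 0)
    (n : ℕ) (B : ℝ) (hB : 0 < B)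
    (hσ : ∀ t, 1 ≤ t → t ≤ n → StronglyMeasurable[ℱ (t - 1)] (σ t))
    (hmom : ∀ t m, Integrable (fun ω => |ε t ω| ^ m) μ)
    (hbern : ∀ t, 1 ≤ t → t ≤ n → ∀ m : ℕ, 2 ≤ m →
      μ[fun ω => |ε t ω| ^ m | ℱ (t - 1)] ≤ᵐ[μ]
        fun ω => (1 / 2) * (Nat.factorial m : ℝ) * B ^ (m - 2) * σ t ω ^ 2)
    (ha : ∀ t, 1 ≤ t → StronglyMeasurable[ℱ (t - 1)] (a t))
    (hg : ∀ t, 1 ≤ t → StronglyMeasurable[ℱ (t - 1)] (g t))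
    (hc : ∀ t, 1 ≤ t → StronglyMeasurable[ℱ (t - 1)] (c t))
    (hY : ∀ t, StronglyMeasurable[ℱ t] (Y t))
    (hY0 : ∀ ω, Y 0 ω = 0) (hYn : ∀ t ω, 0 ≤ Y t ω)
    (ha0 : ∀ t ω, 0 ≤ a t ω) (haY : ∀ t ω, a (t+1) ω ≤ Y t ω)
    (hg0 : ∀ t ω, 0 ≤ g t ω) (hg1 : ∀ t ω, 1 ≤ t → g t ω ≤ 1)
    (hcag : ∀ t ω, |c t ω| ≤ a t ω * g t ω)
    (hYsq : ∀ t ω, 1 ≤ t → Y t ω ^ 2 = a t ω ^ 2 + 2 * (ε t ω * c t ω) + (|ε t ω| * g t ω) ^ 2)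
    (C : ℝ)
    (hCn : ∀ᵐ ω ∂μ, ∑ i ∈ Finset.Icc 1 n, σ i ω ^ 2 * g i ω ^ 2 ≤ C ^ 2)
    (r : ℝ) (hr : 0 < r) (l : ℝ) (hl : 0 < l) (hlB : l * B < 1) :
    μ {ω | ∃ t, 1 ≤ t ∧ t ≤ n ∧ r ≤ Y t ω} ≤
      ENNReal.ofReal (2 * Real.exp (-(l * r - l^2 / (2 * (1 - l * B)) * C ^ 2))) := by
  have hlB' : 0 < 1 - l * B := by linarith
  set κ := l^2 / (2 * (1 - l * B)) with hκ
  have hκ0 : 0 ≤ κ := by positivity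
  let S : ℕ → Ω → ℝ := fun t ω => ∑ i ∈ Finset.Icc 1 t, σ i ω ^ 2 * g i ω ^ 2
  have hS0 : ∀ t ω, 0 ≤ S t ω := fun t ω => Finset.sum_nonneg fun i _ => by positivity
  have hSsucc : ∀ t ω, S (t+1) ω = S t ω + σ (t+1) ω ^ 2 * g (t+1) ω ^ 2 := fun t ω =>
    Finset.sum_Icc_succ_top (by omega) _
  have hSm : ∀ t, t + 1 ≤ n → StronglyMeasurable[ℱ t] (S (t+1)) := by
    intro t ht
    refine Finset.stronglyMeasurable_fun_sum _ fun i hi => ?_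
    rw [Finset.mem_Icc] at hi
    have hle : ℱ (i-1) ≤ ℱ t := ℱ.mono (by omega)
    exact (((hσ i hi.1 (by omega)).mono hle).pow 2).mul (((hg i hi.1).mono hle).pow 2)
  let A : ℕ → Set Ω := fun t => {ω | ∀ s ≤ t, Y s ω < r}
  have hAm : ∀ t, MeasurableSet[ℱ t] (A t) := by
    intro t
    have : A t = ⋂ s ∈ Set.Iic t, {ω | Y s ω < r} := by ext ω; simp [A]
    rw [this]
    refine MeasurableSet.biInter (Set.to_countable _) fun s hs => ?_
    exact measurableSet_lt ((hY s).mono (ℱ.mono hs)).measurable measurable_const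
  have hAm0 : ∀ t, MeasurableSet (A t) := fun t => ℱ.le t _ (hAm t)
  let Z : ℕ → Ω → ℝ := fun t ω => cosh (l * Y t ω) * exp (-(κ * S t ω))
  have hZ0 : ∀ t ω, 0 ≤ Z t ω := fun t ω => by
    have := Real.cosh_pos (l * Y t ω); positivity
  have hcosh : ∀ x y : ℝ, 0 ≤ x → x ≤ y → cosh (l * x) ≤ cosh (l * y) := fun x y hx hxy => by
    rw [Real.cosh_le_cosh, abs_of_nonneg (by positivity), abs_of_nonneg (by
      have := hx.trans hxy; positivity)]
    gcongr
  -- one step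
  have hstep : ∀ t, t + 1 ≤ n → ∫⁻ ω in A t, ENNReal.ofReal (Z (t+1) ω) ∂μ ≤
      ∫⁻ ω in A t, ENNReal.ofReal (Z t ω) ∂μ := by
    intro t ht
    rw [← lintegral_indicator (hAm0 t), ← lintegral_indicator (hAm0 t)]
    have hind : ∀ f : Ω → ℝ, (A t).indicator (fun ω => ENNReal.ofReal (f ω)) =
        fun ω => ENNReal.ofReal ((A t).indicator f ω) := by
      intro f; ext ω; by_cases h : ω ∈ A t <;> simp [h]
    rw [hind, hind]
    have hIm : ∀ {f : Ω → ℝ}, StronglyMeasurable[ℱ t] f →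
      StronglyMeasurable[ℱ t] ((A t).indicator f) := fun hf => hf.indicator (hAm t)
    have ham : StronglyMeasurable[ℱ t] (a (t+1)) := ha (t+1) (by omega)
    have hgm : StronglyMeasurable[ℱ t] (g (t+1)) := hg (t+1) (by omega)
    have hcm : StronglyMeasurable[ℱ t] (c (t+1)) := hc (t+1) (by omega)
    have hσm : StronglyMeasurable[ℱ t] (σ (t+1)) := hσ (t+1) (by omega) ht
    have hlam : StronglyMeasurable[ℱ t] (fun ω => l * a (t+1) ω) := ham.const_mul l
    have hem : StronglyMeasurable[ℱ t] (fun ω => exp (-(κ * S (t+1) ω))) :=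
      Real.continuous_exp.comp_stronglyMeasurable ((hSm t ht).const_mul κ).neg
    have hchm : StronglyMeasurable[ℱ t] (fun ω => cosh (l * a (t+1) ω)) :=
      Real.continuous_cosh.comp_stronglyMeasurable hlam
    have hshm : StronglyMeasurable[ℱ t] (fun ω => sinh (l * a (t+1) ω)) :=
      Real.continuous_sinh.comp_stronglyMeasurable hlam
    have he1 : ∀ ω, exp (-(κ * S (t+1) ω)) ≤ 1 := fun ω => by
      rw [Real.exp_le_one_iff]; have := hS0 (t+1) ω; nlinarith [mul_nonneg hκ0 this]
    have he1' : ∀ ω, exp (-(κ * S t ω)) ≤ 1 := fun ω => by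
      rw [Real.exp_le_one_iff]; have := hS0 t ω; nlinarith [mul_nonneg hκ0 this]
    have hach : ∀ ω ∈ A t, cosh (l * a (t+1) ω) ≤ cosh (l * r) := fun ω hω =>
      hcosh _ _ (ha0 _ _) ((haY t ω).trans (hω t le_rfl).le)
    have hK1 : 1 ≤ cosh (l * r) := Real.one_le_cosh _
    -- bound for the linear coefficient
    have hLb : ∀ ω, |l * c (t+1) ω * (sinh (l * a (t+1) ω) / (l * a (t+1) ω)) * l| ≤
        l * cosh (l * a (t+1) ω) := by
      intro ω
      have h1 := hcag (t+1) ω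
      have h2 := ha0 (t+1) ω
      have h3 := hg1 (t+1) ω (by omega)
      have h5 : 0 ≤ sinh (l * a (t+1) ω) := Real.sinh_nonneg_iff.2 (by positivity)
      have h4 : sinh (l * a (t+1) ω) ≤ cosh (l * a (t+1) ω) := (Real.sinh_lt_cosh _).le
      have h6 := Real.cosh_pos (l * a (t+1) ω)
      rcases h2.eq_or_lt with h | h
      · simp [← h]; positivity
      · have : |l * c (t+1) ω * (sinh (l * a (t+1) ω) / (l * a (t+1) ω)) * l| =
          l * (|c (t+1) ω| / a (t+1) ω * sinh (l * a (t+1) ω)) := by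
          rw [abs_mul, abs_mul, abs_mul, abs_div, abs_of_pos hl, abs_of_nonneg h5,
            abs_of_pos (by positivity : 0 < l * a (t+1) ω)]; field_simp
        rw [this]
        gcongr
        have h7 : |c (t+1) ω| / a (t+1) ω ≤ 1 := by
          rw [div_le_one h]; nlinarith
        nlinarith [mul_le_mul_of_nonneg_right h7 h5]
    refine one_step (ℱ.le t) (ε (t+1)) (σ (t+1))
      ((A t).indicator fun ω => exp (-(κ * S (t+1) ω)) * cosh (l * a (t+1) ω)) (g (t+1))
      ((A t).indicator fun ω => exp (-(κ * S (t+1) ω)) *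
        (l * c (t+1) ω * (sinh (l * a (t+1) ω) / (l * a (t+1) ω)) * l))
      _ _ B l (max 1 l * cosh (l * r)) hB hl hlB (hεint _ (by omega)) (hε0 (t+1) (by omega))
      (hmom (t+1)) (hbern (t+1) (by omega) ht) hσm (hIm (hem.mul hchm)) hgm ?_ ?_ ?_ (hg0 _)
      (fun ω => hg1 _ ω (by omega)) ?_ ?_ ?_ ?_ ?_
    · exact hIm (hem.mul (((hcm.const_mul l).mul
        (hshm.measurable.div hlam.measurable).stronglyMeasurable).mul stronglyMeasurable_const))
    · intro ω
      exact Set.indicator_nonneg (fun ω _ => by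
        have := Real.cosh_pos (l * a (t+1) ω); positivity) ω
    · intro ω
      have hp := Real.cosh_pos (l * a (t+1) ω)
      by_cases h : ω ∈ A t
      · rw [Set.indicator_of_mem h]
        have := hach ω h
        calc _ ≤ 1 * cosh (l * r) := by gcongr; exact he1 ω
          _ ≤ _ := by gcongr; exact le_max_left _ _
      · rw [Set.indicator_of_notMem h]; positivity
    · intro ω
      have hp := Real.cosh_pos (l * a (t+1) ω)
      by_cases h : ω ∈ A t
      · rw [Set.indicator_of_mem h, abs_mul, abs_of_pos (Real.exp_pos _)]
        calc _ ≤ 1 * (l * cosh (l * r)) := by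
              gcongr
              · exact he1 ω
              · refine (hLb ω).trans ?_
                have := hach ω h
                gcongr
          _ ≤ _ := by rw [one_mul]; gcongr; exact le_max_right _ _
      · rw [Set.indicator_of_notMem h, abs_zero]; positivity
    · intro ω; exact Set.indicator_nonneg (fun ω _ => hZ0 _ ω) ω
    · intro ω
      by_cases h : ω ∈ A t
      · simp only [Set.indicator_of_mem h]
        have hk := key_scalar (l * a (t+1) ω) (l * (|ε (t+1) ω| * g (t+1) ω))
          (l^2 * (ε (t+1) ω * c (t+1) ω)) (l * Y (t+1) ω)
          (mul_nonneg hl.le (ha0 _ _)) (mul_nonneg hl.le (mul_nonneg (abs_nonneg _) (hg0 _ _)))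
          (by
            rw [abs_mul, abs_mul, abs_of_nonneg (by positivity)]
            have := mul_le_mul_of_nonneg_left (hcag (t+1) ω)
              (by positivity : 0 ≤ l^2 * |ε (t+1) ω|)
            linarith)
          (by rw [mul_pow, hYsq (t+1) ω (by omega)]; ring)
        have := mul_le_mul_of_nonneg_left hk (Real.exp_pos (-(κ * S (t+1) ω))).le
        calc Z (t+1) ω = exp (-(κ * S (t+1) ω)) * cosh (l * Y (t+1) ω) := mul_comm _ _
          _ ≤ _ := this
          _ = _ := by ring
      · simp [Set.indicator_of_notMem h]
    · intro ω
      by_cases h : ω ∈ A t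
      · simp only [Set.indicator_of_mem h]
        have h1 := Real.add_one_le_exp (κ * (σ (t+1) ω ^ 2 * g (t+1) ω ^ 2))
        have h2 := hcosh _ _ (ha0 (t+1) ω) (haY t ω)
        have hp := Real.cosh_pos (l * a (t+1) ω)
        have h3 : exp (-(κ * S (t+1) ω)) * exp (κ * (σ (t+1) ω ^ 2 * g (t+1) ω ^ 2)) =
            exp (-(κ * S t ω)) := by
          rw [← Real.exp_add, hSsucc]; ring_nf
        calc _ ≤ exp (-(κ * S (t+1) ω)) * cosh (l * a (t+1) ω) *
              exp (κ * (σ (t+1) ω ^ 2 * g (t+1) ω ^ 2)) := by gcongr; linarith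
          _ = cosh (l * a (t+1) ω) * exp (-(κ * S t ω)) := by rw [← h3]; ring
          _ ≤ Z t ω := by simp only [Z]; gcongr
      · simp [Set.indicator_of_notMem h]
    · intro ω
      by_cases h : ω ∈ A t
      · rw [Set.indicator_of_mem h]
        have h2 := hcosh _ _ (hYn t ω) (h t le_rfl).le
        calc Z t ω ≤ cosh (l * r) * 1 := by simp only [Z]; gcongr; exact he1' ω
          _ = 1 * cosh (l * r) := by ring
          _ ≤ _ := by gcongr; exact le_max_left _ _
      · rw [Set.indicator_of_notMem h]; positivity
  set q : ℝ := cosh (l * r) * exp (-(κ * C^2)) with hq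
  have hq0 : 0 < q := by have := Real.cosh_pos (l * r); positivity
  have hAsub : ∀ t, A (t+1) ⊆ A t := fun t ω hω s hs => hω s (by omega)
  have hind : ∀ t, t ≤ n → ∫⁻ ω in A t, ENNReal.ofReal (Z t ω) ∂μ +
      ENNReal.ofReal q * μ (A t)ᶜ ≤ 1 := by
    intro t
    induction t with
    | zero =>
      intro _
      have : A 0 = Set.univ := by ext ω; simp [A, hY0, hr]
      rw [this]; simp [Z, S, hY0]
    | succ t ih =>
      intro ht
      refine le_trans ?_ (ih (by omega))
      have hU : (A (t+1))ᶜ = (A t)ᶜ ∪ (A t \ A (t+1)) := by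
        ext ω
        have := @hAsub t ω
        simp only [Set.mem_compl_iff, Set.mem_union, Set.mem_sdiff]; tauto
      have h1 : μ (A (t+1))ᶜ ≤ μ (A t)ᶜ + μ (A t \ A (t+1)) := by
        rw [hU]; exact measure_union_le _ _
      have h2 : ENNReal.ofReal q * μ (A t \ A (t+1)) ≤
          ∫⁻ ω in A t \ A (t+1), ENNReal.ofReal (Z (t+1) ω) ∂μ := by
        rw [← setLIntegral_const]
        apply setLIntegral_mono_ae' ((hAm0 t).diff (hAm0 (t+1)))
        filter_upwards [hCn] with ω hω hmem
        apply ENNReal.ofReal_le_ofReal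
        have hr' : r ≤ Y (t+1) ω := by
          by_contra hcon
          push Not at hcon
          apply hmem.2
          intro s hs
          rcases Nat.lt_or_ge s (t+1) with h | h
          · exact hmem.1 s (by omega)
          · have : s = t+1 := by omega
            rw [this]; exact hcon
        have hSle : S (t+1) ω ≤ C^2 := by
          refine le_trans ?_ hω
          exact Finset.sum_le_sum_of_subset_of_nonneg
            (Finset.Icc_subset_Icc_right ht) fun i _ _ => by positivity
        have := hcosh _ _ hr.le hr'
        simp only [q, Z]
        gcongr
      have h3 : ∫⁻ ω in A t, ENNReal.ofReal (Z (t+1) ω) ∂μ =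
          ∫⁻ ω in A (t+1), ENNReal.ofReal (Z (t+1) ω) ∂μ +
          ∫⁻ ω in A t \ A (t+1), ENNReal.ofReal (Z (t+1) ω) ∂μ := by
        rw [← lintegral_inter_add_sdiff _ (A t) (hAm0 (t+1)),
          Set.inter_eq_self_of_subset_right (hAsub t)]
      calc _ ≤ ∫⁻ ω in A (t+1), ENNReal.ofReal (Z (t+1) ω) ∂μ +
            ENNReal.ofReal q * (μ (A t)ᶜ + μ (A t \ A (t+1))) := by gcongr
        _ = (∫⁻ ω in A (t+1), ENNReal.ofReal (Z (t+1) ω) ∂μ +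
            ENNReal.ofReal q * μ (A t \ A (t+1))) + ENNReal.ofReal q * μ (A t)ᶜ := by ring
        _ ≤ (∫⁻ ω in A (t+1), ENNReal.ofReal (Z (t+1) ω) ∂μ +
          ∫⁻ ω in A t \ A (t+1), ENNReal.ofReal (Z (t+1) ω) ∂μ) +
            ENNReal.ofReal q * μ (A t)ᶜ := by gcongr
        _ ≤ _ := by rw [← h3]; exact add_le_add (hstep t ht) le_rfl
  have hfin := hind n le_rfl
  have hset : {ω | ∃ t, 1 ≤ t ∧ t ≤ n ∧ r ≤ Y t ω} ⊆ (A n)ᶜ := by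
    rintro ω ⟨t, _, h2, h3⟩ hω
    exact absurd (hω t h2) (not_lt.2 h3)
  have h1 : ENNReal.ofReal q * μ (A n)ᶜ ≤ 1 := le_trans le_add_self hfin
  calc _ ≤ μ (A n)ᶜ := measure_mono hset
    _ ≤ 1 / ENNReal.ofReal q := by
        rw [ENNReal.le_div_iff_mul_le (Or.inl (by simpa using hq0)) (Or.inl ENNReal.ofReal_ne_top)]
        rw [mul_comm]; exact h1
    _ = ENNReal.ofReal (1 / q) := by
        rw [ENNReal.ofReal_div_of_pos hq0, ENNReal.ofReal_one]
    _ ≤ _ := by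
        apply ENNReal.ofReal_le_ofReal
        rw [div_le_iff₀ hq0, hq]
        have hc2 : exp (l * r) ≤ 2 * cosh (l * r) := by
          rw [Real.cosh_eq]; have := Real.exp_pos (-(l * r)); linarith
        calc (1:ℝ) = exp (-(l * r - κ * C^2)) * (exp (l * r) * exp (-(κ * C^2))) := by
              rw [← Real.exp_add, ← Real.exp_add, eq_comm, Real.exp_eq_one_iff]; ring
          _ ≤ exp (-(l * r - κ * C^2)) * ((2 * cosh (l * r)) * exp (-(κ * C^2))) := by gcongr
          _ = _ := by ring

section
variable {H : Type*} [NormedAddCommGroup H] [InnerProductSpace ℝ H] [CompleteSpace H]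

/-- operator facts for a positive invertible square root -/
lemma sqrt_inv_symm (Q R : H →L[ℝ] H) (hQ : Q.IsPositive) (hR : R ∘L Q = 1 ∧ Q ∘L R = 1)
    (x y : H) : ⟪R x, y⟫ = ⟪x, R y⟫ := by
  have h1 : ∀ z, Q (R z) = z := fun z => by
    simpa using congrArg (fun T : H →L[ℝ] H => T z) hR.2
  have hs : ∀ a b, ⟪Q a, b⟫ = ⟪a, Q b⟫ := fun a b => hQ.1 a b
  calc ⟪R x, y⟫ = ⟪R x, Q (R y)⟫ := by rw [h1]
    _ = ⟪Q (R x), R y⟫ := (hs _ _).symm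
    _ = _ := by rw [h1]

lemma quad_eq (Q : H →L[ℝ] H) (hQ : Q.IsPositive) (ρ : ℝ) (x : ℕ → H) (s : Finset ℕ)
    (h : Q ∘L Q = ρ • (1 : H →L[ℝ] H) + ∑ i ∈ s, outerProd (x i)) (w : H) :
    ‖Q w‖ ^ 2 = ρ * ‖w‖^2 + ∑ i ∈ s, ⟪x i, w⟫ ^ 2 := by
  have hs : ∀ a b, ⟪Q a, b⟫ = ⟪a, Q b⟫ := fun a b => hQ.1 a b
  have h1 : Q (Q w) = ρ • w + ∑ i ∈ s, ⟪x i, w⟫ • x i := by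
    have := congrArg (fun T : H →L[ℝ] H => T w) h
    simpa [outerProd] using this
  rw [← real_inner_self_eq_norm_sq, hs, h1, inner_add_right, inner_smul_right, inner_sum,
    real_inner_self_eq_norm_sq]
  congr 1
  apply Finset.sum_congr rfl
  intro i _
  rw [inner_smul_right, real_inner_comm, sq]

lemma inv_antitone (Q R Q' R' : H →L[ℝ] H) (hQ : Q.IsPositive) (hQ' : Q'.IsPositive)
    (hR : R ∘L Q = 1 ∧ Q ∘L R = 1) (hR' : R' ∘L Q' = 1 ∧ Q' ∘L R' = 1)
    (hle : ∀ w, ‖Q w‖ ^ 2 ≤ ‖Q' w‖^2) (v : H) : ‖R' v‖ ≤ ‖R v‖ := by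
  have h1 : ∀ z, Q (R z) = z := fun z => by
    simpa using congrArg (fun T : H →L[ℝ] H => T z) hR.2
  have h1' : ∀ z, Q' (R' z) = z := fun z => by
    simpa using congrArg (fun T : H →L[ℝ] H => T z) hR'.2
  have hs : ∀ a b, ⟪Q a, b⟫ = ⟪a, Q b⟫ := fun a b => hQ.1 a b
  have e : ‖R' v‖^2 = ⟪R v, Q (R' (R' v))⟫ := by
    rw [← hs, h1, ← real_inner_self_eq_norm_sq, sqrt_inv_symm Q' R' hQ' hR']
  have b : ‖Q (R' (R' v))‖ ≤ ‖R' v‖ := by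
    have := hle (R' (R' v))
    rw [h1'] at this
    exact (sq_le_sq₀ (norm_nonneg _) (norm_nonneg _)).1 this
  have c := real_inner_le_norm (R v) (Q (R' (R' v)))
  rcases (norm_nonneg (R' v)).eq_or_lt with h | h
  · rw [← h]; positivity
  · have : ‖R v‖ * ‖Q (R' (R' v))‖ ≤ ‖R v‖ * ‖R' v‖ := by gcongr
    nlinarith

lemma inv_le_one (Q R : H →L[ℝ] H) (hQ : Q.IsPositive)
    (hR : R ∘L Q = 1 ∧ Q ∘L R = 1) (v : H) (hle : ∀ w, ⟪v, w⟫^2 ≤ ‖Q w‖^2) : ‖R v‖ ≤ 1 := by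
  have h1 : ∀ z, Q (R z) = z := fun z => by
    simpa using congrArg (fun T : H →L[ℝ] H => T z) hR.2
  have := hle (R (R v))
  rw [← sqrt_inv_symm Q R hQ hR, real_inner_self_eq_norm_sq, h1] at this
  by_contra hc
  push Not at hc
  nlinarith [sq_nonneg ‖R v‖, mul_pos (sub_pos.2 hc) (sub_pos.2 hc)]

lemma inner_eq (Q R A : H →L[ℝ] H) (hQ : Q.IsPositive) (hR : R ∘L Q = 1 ∧ Q ∘L R = 1)
    (hA : Q ∘L Q = A) (x y : H) : ⟪R x, R y⟫ = ⟪x, Ring.inverse A y⟫ := by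
  have h1 : A * (R * R) = 1 := by
    rw [← hA]; change Q * Q * (R * R) = 1
    have : Q * R = 1 := hR.2
    rw [mul_assoc, ← mul_assoc Q R R, this, one_mul, this]
  have h2 : (R * R) * A = 1 := by
    rw [← hA]; change (R * R) * (Q * Q) = 1
    have : R * Q = 1 := hR.1
    rw [mul_assoc, ← mul_assoc R Q Q, this, one_mul, this]
  have : Ring.inverse A = R * R := Ring.inverse_unit ⟨A, R * R, h1, h2⟩
  rw [this, sqrt_inv_symm Q R hQ hR]; rfl

lemma isUnit_of (Q R A : H →L[ℝ] H) (hR : R ∘L Q = 1 ∧ Q ∘L R = 1)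
    (hA : Q ∘L Q = A) : IsUnit A := by
  have : IsUnit Q := ⟨⟨Q, R, hR.2, hR.1⟩, rfl⟩
  rw [← hA]; exact this.mul this

lemma continuous_outerProd : Continuous (outerProd : H → H →L[ℝ] H) := by
  unfold outerProd
  have : Continuous fun p : (H →L[ℝ] ℝ) × H => p.1.smulRight p.2 := by
    have := (ContinuousLinearMap.smulRightL ℝ H H).continuous₂
    exact this
  exact this.comp ((innerSL ℝ).continuous.prodMk continuous_id)

lemma sm_inner {Ω : Type*} {m : MeasurableSpace Ω} (Q R : Ω → H →L[ℝ] H) (ρ : ℝ) (X : ℕ → Ω → H)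
    (s : Finset ℕ) (hX : ∀ i ∈ s, StronglyMeasurable[m] (X i))
    (hQ : ∀ ω, (Q ω).IsPositive) (hR : ∀ ω, R ω ∘L Q ω = 1 ∧ Q ω ∘L R ω = 1)
    (hA : ∀ ω, Q ω ∘L Q ω = ρ • (1 : H →L[ℝ] H) + ∑ i ∈ s, outerProd (X i ω))
    (u v : Ω → H) (hu : StronglyMeasurable[m] u) (hv : StronglyMeasurable[m] v) :
    StronglyMeasurable[m] fun ω => ⟪R ω (u ω), R ω (v ω)⟫ := by
  have hsm : StronglyMeasurable[m]
      (fun ω => ρ • (1 : H →L[ℝ] H) + ∑ i ∈ s, outerProd (X i ω)) := by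
    refine stronglyMeasurable_const.add (Finset.stronglyMeasurable_fun_sum s fun i hi => ?_)
    exact continuous_outerProd.comp_stronglyMeasurable (hX i hi)
  have hinv : StronglyMeasurable[m] (fun ω => Ring.inverse
      (ρ • (1 : H →L[ℝ] H) + ∑ i ∈ s, outerProd (X i ω))) := by
    let f : Ω → {A : H →L[ℝ] H // IsUnit A} := fun ω =>
      ⟨_, isUnit_of _ _ _ (hR ω) (hA ω)⟩
    have hf : StronglyMeasurable[m] f :=
      (_root_.Embedding.comp_stronglyMeasurable_iff (f := f) Topology.IsEmbedding.subtypeVal).1 hsm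
    have hc : Continuous fun A : {A : H →L[ℝ] H // IsUnit A} => Ring.inverse (A : H →L[ℝ] H) := by
      rw [continuous_iff_continuousAt]
      rintro ⟨A, hAu⟩
      obtain ⟨a, rfl⟩ := hAu
      exact ContinuousAt.comp (f := Subtype.val) (x := (⟨a, a.isUnit⟩ : {A : H →L[ℝ] H // IsUnit A}))
        (g := Ring.inverse) (NormedRing.inverse_continuousAt a) continuous_subtype_val.continuousAt
    exact hc.comp_stronglyMeasurable hf
  have : (fun ω => ⟪R ω (u ω), R ω (v ω)⟫) = fun ω => ⟪u ω, Ring.inverse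
      (ρ • (1 : H →L[ℝ] H) + ∑ i ∈ s, outerProd (X i ω)) (v ω)⟫ := by
    ext ω; exact inner_eq _ _ _ (hQ ω) (hR ω) (hA ω) _ _
  rw [this]
  refine hu.inner ?_
  have ev : Continuous fun p : (H →L[ℝ] H) × H => p.1 p.2 := by fun_prop
  exact ev.comp_stronglyMeasurable (hinv.prodMk hv)
end

theorem stmt_4
    {H : Type*} [NormedAddCommGroup H] [InnerProductSpace ℝ H] [CompleteSpace H]
    [SecondCountableTopology H]
    {Ω : Type*} {m0 : MeasurableSpace Ω} {μ : Measure Ω} [IsProbabilityMeasure μ]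
    (ℱ : Filtration ℕ m0)
    (X : ℕ → Ω → H) (ε : ℕ → Ω → ℝ)
    (hX : ∀ t, 1 ≤ t → StronglyMeasurable[ℱ (t - 1)] (X t))
    (hεmeas : ∀ t, 1 ≤ t → StronglyMeasurable[ℱ t] (ε t))
    (hεint : ∀ t, 1 ≤ t → Integrable (ε t) μ)
    (hε0 : ∀ t, 1 ≤ t → μ[ε t | ℱ (t - 1)] =ᵐ[μ] 0)
    (ρ : ℝ) (hρ : 0 < ρ)
    (Q Qinv : ℕ → Ω → H →L[ℝ] H)
    (hQpos : ∀ t ω, (Q t ω).IsPositive)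
    (hQsq : ∀ t ω, Q t ω ∘L Q t ω =
      ρ • (1 : H →L[ℝ] H) + ∑ i ∈ Finset.Icc 1 t, outerProd (X i ω))
    (hQinv : ∀ t ω, Qinv t ω ∘L Q t ω = 1 ∧ Q t ω ∘L Qinv t ω = 1)
    (n : ℕ) (hn : 1 ≤ n)
    (B : ℝ) (hB : 0 < B) (σ : ℕ → Ω → ℝ)
    (hσmeas : ∀ t, 1 ≤ t → t ≤ n → StronglyMeasurable[ℱ (t - 1)] (σ t))
    (hmom : ∀ t m, Integrable (fun ω => |ε t ω| ^ m) μ)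
    (hbern : ∀ t, 1 ≤ t → t ≤ n → ∀ m : ℕ, 2 ≤ m →
      μ[fun ω => |ε t ω| ^ m | ℱ (t - 1)] ≤ᵐ[μ]
        fun ω => (1 / 2) * (Nat.factorial m : ℝ) * B ^ (m - 2) * σ t ω ^ 2)
    (C : ℝ) (hC : 0 ≤ C)
    (hCn : ∀ᵐ ω ∂μ, ∑ i ∈ Finset.Icc 1 n, σ i ω ^ 2 * ‖Qinv i ω (X i ω)‖ ^ 2 ≤ C ^ 2)
    (r : ℝ) (hr : 0 ≤ r) :
    μ {ω | ∃ t, 1 ≤ t ∧ t ≤ n ∧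
        r ≤ ‖Qinv t ω (∑ i ∈ Finset.Icc 1 t, ε i ω • X i ω)‖} ≤
      ENNReal.ofReal (2 * Real.exp (-(r ^ 2 / (2 * (C ^ 2 + B * r))))) := by
  have hsumm : ∀ t k, k ≤ t → StronglyMeasurable[ℱ t]
      (fun ω => ∑ i ∈ Finset.Icc 1 k, ε i ω • X i ω) := by
    intro t k hk
    refine Finset.stronglyMeasurable_fun_sum _ fun i hi => ?_
    rw [Finset.mem_Icc] at hi
    exact ((hεmeas i hi.1).mono (ℱ.mono (by omega))).smul
      ((hX i hi.1).mono (ℱ.mono (by omega)))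
  have hin : ∀ (s t : ℕ) (u v : Ω → H), t ≤ s + 1 → StronglyMeasurable[ℱ s] u →
      StronglyMeasurable[ℱ s] v →
      StronglyMeasurable[ℱ s] fun ω => ⟪Qinv t ω (u ω), Qinv t ω (v ω)⟫ := by
    intro s t u v hst hu hv
    refine sm_inner (Q t) (Qinv t) ρ X (Finset.Icc 1 t) (fun i hi => ?_) (hQpos t) (hQinv t)
      (hQsq t) u v hu hv
    rw [Finset.mem_Icc] at hi
    exact (hX i hi.1).mono (ℱ.mono (by omega))
  have hnm : ∀ (s t : ℕ) (u : Ω → H), t ≤ s + 1 → StronglyMeasurable[ℱ s] u →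
      StronglyMeasurable[ℱ s] fun ω => ‖Qinv t ω (u ω)‖ := by
    intro s t u hst hu
    have := Real.continuous_sqrt.comp_stronglyMeasurable (hin s t u u hst hu hu)
    have e : (fun ω => ‖Qinv t ω (u ω)‖) =
        fun ω => √⟪Qinv t ω (u ω), Qinv t ω (u ω)⟫ := by
      ext ω; rw [norm_eq_sqrt_real_inner]
    rw [e]; exact this
  have main : ∀ (hr' : 0 < r) (l : ℝ) (hl : 0 < l) (hlB : l * B < 1),
      μ {ω | ∃ t, 1 ≤ t ∧ t ≤ n ∧
        r ≤ ‖Qinv t ω (∑ i ∈ Finset.Icc 1 t, ε i ω • X i ω)‖} ≤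
      ENNReal.ofReal (2 * Real.exp (-(l * r - l^2 / (2 * (1 - l * B)) * C ^ 2))) := by
    intro hr' l hl hlB
    refine max_ineq ℱ ε σ
      (fun t ω => ‖Qinv t ω (∑ i ∈ Finset.Icc 1 (t-1), ε i ω • X i ω)‖)
      (fun t ω => ‖Qinv t ω (X t ω)‖)
      (fun t ω => ⟪Qinv t ω (∑ i ∈ Finset.Icc 1 (t-1), ε i ω • X i ω), Qinv t ω (X t ω)⟫)
      (fun t ω => ‖Qinv t ω (∑ i ∈ Finset.Icc 1 t, ε i ω • X i ω)‖)
      hεint hε0 n B hB hσmeas hmom hbern ?_ ?_ ?_ ?_ ?_ ?_ ?_ ?_ ?_ ?_ ?_ ?_ C hCn r hr' l hl hlB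
    · intro t ht; exact hnm (t-1) t _ (by omega) (hsumm _ _ le_rfl)
    · intro t ht; exact hnm (t-1) t _ (by omega) (hX t ht)
    · intro t ht; exact hin (t-1) t _ _ (by omega) (hsumm _ _ le_rfl) (hX t ht)
    · intro t; exact hnm t t _ (by omega) (hsumm _ _ le_rfl)
    · intro ω; simp
    · intro t ω; exact norm_nonneg _
    · intro t ω; exact norm_nonneg _
    · intro t ω
      simp only [Nat.add_sub_cancel]
      refine inv_antitone (Q t ω) (Qinv t ω) (Q (t+1) ω) (Qinv (t+1) ω) (hQpos _ _) (hQpos _ _)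
        (hQinv _ _) (hQinv _ _) (fun w => ?_) _
      rw [quad_eq _ (hQpos t ω) ρ (fun i => X i ω) _ (hQsq t ω),
        quad_eq _ (hQpos (t+1) ω) ρ (fun i => X i ω) _ (hQsq (t+1) ω),
        Finset.sum_Icc_succ_top (by omega)]
      have := sq_nonneg ⟪X (t+1) ω, w⟫
      linarith
    · intro t ω; exact norm_nonneg _
    · intro t ω ht
      refine inv_le_one (Q t ω) (Qinv t ω) (hQpos _ _) (hQinv _ _) _ fun w => ?_
      rw [quad_eq _ (hQpos t ω) ρ (fun i => X i ω) _ (hQsq t ω)]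
      have h1 : ⟪X t ω, w⟫ ^ 2 ≤ ∑ i ∈ Finset.Icc 1 t, ⟪X i ω, w⟫ ^ 2 :=
        Finset.single_le_sum (f := fun i => ⟪X i ω, w⟫ ^ 2) (fun i _ => sq_nonneg _)
          (Finset.mem_Icc.2 ⟨ht, le_rfl⟩)
      have : 0 ≤ ρ * ‖w‖^2 := by positivity
      linarith
    · intro t ω; exact abs_real_inner_le_norm _ _
    · intro t ω ht
      obtain ⟨s, rfl⟩ : ∃ s, t = s + 1 := ⟨t - 1, by omega⟩
      simp only [Nat.add_sub_cancel]
      rw [Finset.sum_Icc_succ_top (by omega), map_add, map_smul, norm_add_sq_real,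
        inner_smul_right, norm_smul, Real.norm_eq_abs]
  rcases hr.eq_or_lt with h0 | hr'
  · rw [← h0]
    refine prob_le_one.trans ?_
    simp
  · rcases hC.eq_or_lt with hC0 | hC'
    · have := main hr' (1 / (2 * B)) (by positivity) (by field_simp; norm_num)
      refine this.trans (le_of_eq ?_)
      rw [← hC0]
      congr 3
      field_simp
      ring
    · have hD : 0 < C^2 + B * r := by positivity
      have e1 : 1 - r / (C^2 + B * r) * B = C^2 / (C^2 + B * r) := by field_simp; ring
      have hpos : 0 < C^2 / (C^2 + B * r) := by positivity
      have := main hr' (r / (C^2 + B * r)) (by positivity) (by linarith)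
      refine this.trans (le_of_eq ?_)
      rw [e1]
      congr 3
      field_simp
      ring
end

section
/- Fix an integer n ≥ 1 and δ ∈ (0,1). Suppose |ε_t| ≤ B almost surely and Var(ε_t | F_{t-1}) ≤ σ_t² for all 1 ≤ t ≤ n, with σ_t F_{t-1}-measurable and B > 0, and suppose Σ_{i=1}^n σ_i² ‖G_i‖² ≤ C_n² almost surely, where C_n > 0 is deterministic. Let h(u) = (1 + u) log(1 + u) − u for u ≥ 0, which is a strictly increasing bijection of [0,∞) onto itself. Then with probability at least 1 − δ, sup_{1 ≤ t ≤ n} ‖(ρI + V_t)^{-1/2} M_t‖ ≤ (C_n²/B) · h^{-1}( (B²/C_n²) log(2/δ) ). -/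
open MeasureTheory Filter Real
open scoped RealInnerProductSpace

theorem aux_cosh_convex (z z1 z2 p q : ℝ) (hp : 0 ≤ p) (hq : 0 ≤ q) (hpq : p + q = 1)
    (hz : z ^ 2 = p * z1 ^ 2 + q * z2 ^ 2) : cosh z ≤ p * cosh z1 + q * cosh z2 := by
  have h1 := (Real.hasSum_cosh z1).mul_left p
  have h2 := (Real.hasSum_cosh z2).mul_left q
  refine hasSum_le ?_ (Real.hasSum_cosh z) (h1.add h2)
  intro k
  have := (convexOn_pow (𝕜 := ℝ) k).2 (Set.mem_Ici.2 (sq_nonneg z1)) (Set.mem_Ici.2 (sq_nonneg z2)) hp hq hpq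
  simp only [smul_eq_mul] at this
  rw [← hz] at this
  simp only [pow_mul]
  rw [← mul_div_assoc, ← mul_div_assoc, ← add_div]
  gcongr

theorem aux_psi (θ y : ℝ) (h0 : 0 ≤ θ) (h1 : θ ≤ 1) (hy : 0 ≤ y) :
    exp (θ * y) - 1 - θ * y ≤ θ ^ 2 * (exp y - 1 - y) := by
  have key : ∀ x : ℝ, HasSum (fun k : ℕ => x ^ (k + 2) / ((k + 2).factorial : ℝ)) (exp x - 1 - x) := by
    intro x
    have h := NormedSpace.expSeries_div_hasSum_exp (𝔸 := ℝ) x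
    rw [← Real.exp_eq_exp_ℝ] at h
    have := (hasSum_nat_add_iff' 2).2 h
    simpa [Finset.sum_range_succ, sub_sub] using this
  refine hasSum_le ?_ (key _) ((key y).mul_left (θ ^ 2))
  intro k
  rw [← mul_div_assoc]
  gcongr
  rw [mul_pow, pow_add θ]
  have : θ ^ k ≤ 1 := pow_le_one₀ h0 h1
  have h3 : 0 ≤ θ ^ 2 * y ^ (k + 2) := by positivity
  nlinarith

theorem aux_cosh_norm {H : Type*} [NormedAddCommGroup H] [InnerProductSpace ℝ H] (x d : H) :
    cosh ‖x + d‖ ≤ cosh ‖x‖ * (exp ‖d‖ - ‖d‖) + sinh ‖x‖ / ‖x‖ * ⟪x, d⟫ := by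
  have hs : ‖d‖ ≤ sinh ‖d‖ := Real.self_le_sinh_iff.2 (norm_nonneg d)
  have hcs := Real.cosh_add_sinh ‖d‖
  by_cases hx : x = 0
  · subst hx; simp; linarith
  by_cases hd : d = 0
  · subst hd; simp
  have ha : 0 < ‖x‖ := norm_pos_iff.2 hx
  have hb : 0 < ‖d‖ := norm_pos_iff.2 hd
  have hcb := abs_le.1 (abs_real_inner_div_norm_mul_norm_le_one x d)
  set c := ⟪x, d⟫ / (‖x‖ * ‖d‖) with hc
  have hin : ⟪x, d⟫ = c * (‖x‖ * ‖d‖) := by rw [hc]; field_simp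
  have h := aux_cosh_convex ‖x + d‖ (‖x‖ + ‖d‖) (‖x‖ - ‖d‖) ((1 + c) / 2) ((1 - c) / 2)
    (by linarith) (by linarith) (by ring) (by
      rw [norm_add_sq_real, hin]; ring)
  rw [Real.cosh_add, Real.cosh_sub] at h
  have e1 : sinh ‖x‖ / ‖x‖ * ⟪x, d⟫ = c * sinh ‖x‖ * ‖d‖ := by rw [hin]; field_simp
  rw [e1, ← hcs]
  have hsx : 0 ≤ sinh ‖x‖ := Real.sinh_nonneg_iff.2 ha.le
  have hlt : sinh ‖x‖ ≤ cosh ‖x‖ := (Real.sinh_lt_cosh _).le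
  have : c * sinh ‖x‖ ≤ cosh ‖x‖ := by nlinarith
  nlinarith

theorem aux_step {H : Type*} [NormedAddCommGroup H] [InnerProductSpace ℝ H] (x g : H)
    (l B e : ℝ) (hl : 0 ≤ l) (hB : 0 < B) (he : |e| ≤ B) (hg : ‖g‖ ≤ 1) :
    cosh (l * ‖x + e • g‖) ≤ cosh (l * ‖x‖) *
      (1 + (exp (l * B) - 1 - l * B) / B ^ 2 * (‖g‖ ^ 2 * e ^ 2))
      + sinh (l * ‖x‖) / (l * ‖x‖) * (l ^ 2 * ⟪x, g⟫) * e := by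
  have h := aux_cosh_norm (l • x) (l • e • g)
  rw [← smul_add] at h
  simp only [norm_smul, Real.norm_eq_abs, abs_of_nonneg hl, inner_smul_left, inner_smul_right] at h
  have hθ : |e| * ‖g‖ / B ≤ 1 := by
    rw [div_le_one hB]
    nlinarith [norm_nonneg g, abs_nonneg e]
  have h2 := aux_psi (|e| * ‖g‖ / B) (l * B) (by positivity) hθ (by positivity)
  have e1 : |e| * ‖g‖ / B * (l * B) = l * (|e| * ‖g‖) := by field_simp
  rw [e1, div_pow, mul_pow, sq_abs] at h2
  have h3 : exp (l * (|e| * ‖g‖)) - l * (|e| * ‖g‖) ≤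
    1 + (exp (l * B) - 1 - l * B) / B ^ 2 * (‖g‖ ^ 2 * e ^ 2) := by
    have : e ^ 2 * ‖g‖ ^ 2 / B ^ 2 * (exp (l * B) - 1 - l * B) =
      (exp (l * B) - 1 - l * B) / B ^ 2 * (‖g‖ ^ 2 * e ^ 2) := by ring
    linarith
  have h4 := mul_le_mul_of_nonneg_left h3 (Real.cosh_pos (l * ‖x‖)).le
  refine h.trans ?_
  have : sinh (l * ‖x‖) / (l * ‖x‖) * ((starRingEnd ℝ) l * (l * (e * ⟪x, g⟫))) =
    sinh (l * ‖x‖) / (l * ‖x‖) * (l ^ 2 * ⟪x, g⟫) * e := by simp; ring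
  linarith

/-! Operator facts -/
section op
variable {H : Type*} [NormedAddCommGroup H] [InnerProductSpace ℝ H]

theorem aux_symm (Q P : H →L[ℝ] H) (hQ : Q.IsPositive) (h : P ∘L Q = 1 ∧ Q ∘L P = 1) (a b : H) :
    ⟪P a, b⟫ = ⟪a, P b⟫ := by
  have h1 : ∀ y, Q (P y) = y := fun y => by
    have := congrArg (fun f : H →L[ℝ] H => f y) h.2; simpa using this
  have := hQ.1 (P a) (P b)
  simp only [ContinuousLinearMap.coe_coe, h1] at this
  exact this.symm

theorem aux_SM (Q P Q' P' : H →L[ℝ] H) (hQ : Q.IsPositive)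
    (h : P ∘L Q = 1 ∧ Q ∘L P = 1) (h' : P' ∘L Q' = 1 ∧ Q' ∘L P' = 1) (x : H)
    (hS : Q' ∘L Q' = Q ∘L Q + outerProd x) (y : H) :
    P' (P' y) = P (P y) - (⟪x, P (P y)⟫ / (1 + ⟪x, P (P x)⟫)) • P (P x) := by
  have h1 : ∀ y, Q (P y) = y := fun y => by
    have := congrArg (fun f : H →L[ℝ] H => f y) h.2; simpa using this
  have h2 : ∀ y, P' (Q' y) = y := fun y => by
    have := congrArg (fun f : H →L[ℝ] H => f y) h'.1; simpa using this
  have hS' : ∀ y, Q' (Q' y) = Q (Q y) + ⟪x, y⟫ • x := fun y => by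
    have := congrArg (fun f : H →L[ℝ] H => f y) hS; simpa [outerProd] using this
  have hpos : 0 ≤ ⟪x, P (P x)⟫ := by
    rw [← aux_symm Q P hQ h]; exact real_inner_self_nonneg
  set z := P (P y) - (⟪x, P (P y)⟫ / (1 + ⟪x, P (P x)⟫)) • P (P x) with hz
  have : Q' (Q' z) = y := by
    rw [hS', hz]
    simp only [map_sub, map_smul, h1, inner_sub_right, inner_smul_right]
    have : (⟪x, P (P y)⟫ - ⟪x, P (P y)⟫ / (1 + ⟪x, P (P x)⟫) * ⟪x, P (P x)⟫) =
      ⟪x, P (P y)⟫ / (1 + ⟪x, P (P x)⟫) := by field_simp; ring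
    rw [this]; abel
  rw [← this, h2, h2]

theorem aux_normsq (Q P : H →L[ℝ] H) (hQ : Q.IsPositive) (h : P ∘L Q = 1 ∧ Q ∘L P = 1) (a : H) :
    ‖P a‖ ^ 2 = ⟪a, P (P a)⟫ := by
  rw [← aux_symm Q P hQ h, real_inner_self_eq_norm_sq]

theorem aux_contr (Q P Q' P' : H →L[ℝ] H) (hQ : Q.IsPositive) (hQ' : Q'.IsPositive)
    (h : P ∘L Q = 1 ∧ Q ∘L P = 1) (h' : P' ∘L Q' = 1 ∧ Q' ∘L P' = 1) (x : H)
    (hS : Q' ∘L Q' = Q ∘L Q + outerProd x) (y : H) : ‖P' y‖ ≤ ‖P y‖ := by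
  rw [← sq_le_sq₀ (norm_nonneg _) (norm_nonneg _), aux_normsq Q' P' hQ' h',
    aux_normsq Q P hQ h, aux_SM Q P Q' P' hQ h h' x hS]
  have hpos : 0 ≤ ⟪x, P (P x)⟫ := by
    rw [← aux_symm Q P hQ h]; exact real_inner_self_nonneg
  have e : ⟪y, P (P x)⟫ = ⟪x, P (P y)⟫ := by
    rw [← aux_symm Q P hQ h, ← aux_symm Q P hQ h, real_inner_comm]
  rw [inner_sub_right, inner_smul_right, e]
  have : 0 ≤ ⟪x, P (P y)⟫ / (1 + ⟪x, P (P x)⟫) * ⟪x, P (P y)⟫ := by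
    rw [div_mul_eq_mul_div]
    exact div_nonneg (mul_self_nonneg _) (by linarith)
  linarith

theorem aux_G (Q P Q' P' : H →L[ℝ] H) (hQ : Q.IsPositive) (hQ' : Q'.IsPositive)
    (h : P ∘L Q = 1 ∧ Q ∘L P = 1) (h' : P' ∘L Q' = 1 ∧ Q' ∘L P' = 1) (x : H)
    (hS : Q' ∘L Q' = Q ∘L Q + outerProd x) : ‖P' x‖ ≤ 1 := by
  rw [← sq_le_sq₀ (norm_nonneg _) (by norm_num), aux_normsq Q' P' hQ' h',
    aux_SM Q P Q' P' hQ h h' x hS]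
  have hpos : 0 ≤ ⟪x, P (P x)⟫ := by
    rw [← aux_symm Q P hQ h]; exact real_inner_self_nonneg
  rw [inner_sub_right, inner_smul_right]
  have : ⟪x, P (P x)⟫ - ⟪x, P (P x)⟫ / (1 + ⟪x, P (P x)⟫) * ⟪x, P (P x)⟫ =
    ⟪x, P (P x)⟫ / (1 + ⟪x, P (P x)⟫) := by field_simp; ring
  rw [this, one_pow, div_le_one (by linarith)]; linarith
end op

/-- integral pull-out -/
theorem aux_pull {Ω : Type*} {m0 : MeasurableSpace Ω} {μ : Measure Ω} [IsProbabilityMeasure μ]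
    (m : MeasurableSpace Ω) (hm : m ≤ m0) (f g : Ω → ℝ) (hf : StronglyMeasurable[m] f)
    (K : ℝ) (hK : ∀ᵐ ω ∂μ, |f ω| ≤ K) (hg : Integrable g μ) :
    Integrable (fun ω => f ω * g ω) μ ∧ Integrable (fun ω => f ω * (μ[g|m]) ω) μ ∧
    ∫ ω, f ω * g ω ∂μ = ∫ ω, f ω * (μ[g|m]) ω ∂μ := by
  have i1 : Integrable (fun ω => f ω * g ω) μ :=
    hg.bdd_mul (c := K) (hf.mono hm).aestronglyMeasurable (by simpa using hK)
  have i2 : Integrable (fun ω => f ω * (μ[g|m]) ω) μ :=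
    integrable_condExp.bdd_mul (c := K) (hf.mono hm).aestronglyMeasurable (by simpa using hK)
  refine ⟨i1, i2, ?_⟩
  rw [← integral_condExp hm (f := fun ω => f ω * g ω)]
  exact integral_congr_ae (condExp_mul_of_stronglyMeasurable_left hf i1 hg)

theorem aux_int {Ω : Type*} {m0 : MeasurableSpace Ω} {μ : Measure Ω} [IsProbabilityMeasure μ]
    (m : MeasurableSpace Ω) (hm : m ≤ m0) (e s P L k W P0 : Ω → ℝ) (B K1 K2 K3 : ℝ)
    (hP : StronglyMeasurable[m] P) (hL : StronglyMeasurable[m] L) (hk : StronglyMeasurable[m] k)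
    (he : Integrable e μ) (heB : ∀ᵐ ω ∂μ, |e ω| ≤ B)
    (h0 : μ[e|m] =ᵐ[μ] 0) (h2 : μ[fun ω => e ω ^ 2|m] ≤ᵐ[μ] s)
    (hP0 : ∀ ω, 0 ≤ P ω) (hk0 : ∀ ω, 0 ≤ k ω)
    (hPK : ∀ᵐ ω ∂μ, |P ω| ≤ K1) (hLK : ∀ᵐ ω ∂μ, |L ω| ≤ K2) (hkK : ∀ ω, k ω ≤ K3)
    (hW : Integrable W μ) (hI0 : Integrable P0 μ)
    (hWle : ∀ᵐ ω ∂μ, W ω ≤ P ω * (1 + k ω * e ω ^ 2) + L ω * e ω)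
    (hle : ∀ ω, P ω * (1 + k ω * s ω) ≤ P0 ω) :
    ∫ ω, W ω ∂μ ≤ ∫ ω, P0 ω ∂μ := by
  have he2 : Integrable (fun ω => e ω ^ 2) μ := by
    have := he.bdd_mul (c := B) he.aestronglyMeasurable (by simpa using heB)
    simpa [sq] using this
  have hPi : Integrable P μ :=
    Integrable.of_bound (hP.mono hm).aestronglyMeasurable K1 (by simpa using hPK)
  obtain ⟨a1, a2, a3⟩ := aux_pull m hm L e hL K2 hLK he
  obtain ⟨b1, b2, b3⟩ := aux_pull m hm (fun ω => P ω * k ω) _ (hP.mul hk) (K1 * K3) (by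
    filter_upwards [hPK] with ω h
    rw [abs_mul, abs_of_nonneg (hk0 ω)]
    exact mul_le_mul h (hkK ω) (hk0 ω) ((abs_nonneg _).trans h)) he2
  have a4 : ∫ ω, L ω * (μ[e|m]) ω ∂μ = 0 := by
    rw [← integral_zero Ω ℝ (μ := μ)]
    refine integral_congr_ae ?_
    filter_upwards [h0] with ω h
    simp [h]
  calc ∫ ω, W ω ∂μ ≤ ∫ ω, ((P ω + P ω * k ω * e ω ^ 2) + L ω * e ω) ∂μ := by
        refine integral_mono_ae hW ((hPi.add b1).add a1) ?_
        filter_upwards [hWle] with ω h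
        show W ω ≤ (P ω + P ω * k ω * e ω ^ 2) + L ω * e ω
        linarith
    _ = ∫ ω, (P ω + P ω * k ω * (μ[fun ω => e ω ^ 2|m]) ω) ∂μ := by
        rw [integral_add (f := fun ω => P ω + P ω * k ω * e ω ^ 2) (hPi.add b1) a1,
          integral_add hPi b1, integral_add hPi b2, a3, a4, b3,
          add_zero]
    _ ≤ ∫ ω, P0 ω ∂μ := by
        refine integral_mono_ae (hPi.add b2) hI0 ?_
        filter_upwards [h2] with ω h
        have := mul_le_mul_of_nonneg_left h (mul_nonneg (hP0 ω) (hk0 ω))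
        have := hle ω
        show P ω + P ω * k ω * (μ[fun ω => e ω ^ 2|m]) ω ≤ P0 ω
        linarith

theorem aux_max {Ω : Type*} {m0 : MeasurableSpace Ω} {μ : Measure Ω} [IsProbabilityMeasure μ]
    (ℱ : Filtration ℕ m0) (n : ℕ) (Z w : ℕ → Ω → ℝ) (r c : ℝ) (hc : 0 < c)
    (hw : ∀ t, t ≤ n → StronglyMeasurable[ℱ t] (w t))
    (hZ0 : ∀ t ω, 0 ≤ Z t ω) (hZi : ∀ t, t ≤ n → Integrable (Z t) μ)
    (hstep : ∀ t, t < n → ∀ E, MeasurableSet[ℱ t] E →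
      ∫ ω in E, Z (t + 1) ω ∂μ ≤ ∫ ω in E, Z t ω ∂μ)
    (hZc : ∀ᵐ ω ∂μ, ∀ t, t ≤ n → r < w t ω → c ≤ Z t ω)
    (hZ1 : ∀ ω, Z 0 ω = 1) (hw0 : ∀ ω, w 0 ω ≤ r) :
    c * μ.real {ω | ∀ t, t ≤ n → w t ω ≤ r}ᶜ ≤ 1 := by
  have hmeas : ∀ t, t ≤ n → MeasurableSet[ℱ t] {ω | ∀ i, i ≤ t → w i ω ≤ r} := by
    intro t ht
    have : {ω | ∀ i, i ≤ t → w i ω ≤ r} = ⋂ i, ⋂ (_ : i ≤ t), {ω | w i ω ≤ r} := by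
      ext; simp
    rw [this]
    refine MeasurableSet.iInter fun i => MeasurableSet.iInter fun hi => ?_
    exact ℱ.mono hi _ (measurableSet_le (mδ := ℱ i) (hw i (hi.trans ht)).measurable measurable_const)
  have key : ∀ t, t ≤ n → c * μ.real {ω | ∀ i, i ≤ t → w i ω ≤ r}ᶜ +
      ∫ ω in {ω | ∀ i, i ≤ t → w i ω ≤ r}, Z t ω ∂μ ≤ 1 := by
    intro t
    induction t with
    | zero =>
      intro _
      have : {ω | ∀ i, i ≤ 0 → w i ω ≤ r} = Set.univ := by
        ext ω; simp [hw0]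
      rw [this]
      simp [hZ1]
    | succ t ih =>
      intro ht
      have ih := ih (by omega)
      have hs := hstep t ht _ (hmeas t (by omega))
      set E := {ω | ∀ i, i ≤ t → w i ω ≤ r} with hE
      set E' := {ω | ∀ i, i ≤ t + 1 → w i ω ≤ r} with hE'
      have mE : MeasurableSet E := ℱ.le _ _ (hmeas t (by omega))
      have mE' : MeasurableSet E' := ℱ.le _ _ (hmeas (t + 1) ht)
      have hsub : E' ⊆ E := fun ω h i hi => h i (by omega)
      have e1 : ∫ ω in E, Z (t + 1) ω ∂μ =
          ∫ ω in E', Z (t + 1) ω ∂μ + ∫ ω in E \ E', Z (t + 1) ω ∂μ := by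
        rw [← setIntegral_union disjoint_sdiff_self_right (mE.diff mE')
          (hZi _ ht).integrableOn (hZi _ ht).integrableOn, Set.union_sdiff_cancel hsub]
      have e2 : c * μ.real (E \ E') ≤ ∫ ω in E \ E', Z (t + 1) ω ∂μ := by
        have : ∫ ω in E \ E', c ∂μ ≤ ∫ ω in E \ E', Z (t + 1) ω ∂μ := by
          refine setIntegral_mono_on_ae (integrable_const _).integrableOn (hZi _ ht).integrableOn
            (mE.diff mE') ?_
          filter_upwards [hZc] with ω h hω
          refine h _ ht ?_
          by_contra hcon
          refine hω.2 fun i hi => ?_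
          rcases Nat.lt_or_ge t i with h1 | h1
          · obtain rfl : i = t + 1 := by omega
            exact not_lt.1 hcon
          · exact hω.1 i h1
        simpa [mul_comm] using this
      have e3 : μ.real E'ᶜ = μ.real Eᶜ + μ.real (E \ E') := by
        rw [← measureReal_union (μ := μ) (s₁ := Eᶜ) (s₂ := E \ E') (Set.disjoint_left.2 fun ω h h' => h h'.1) (mE.diff mE')]
        congr 1
        ext ω
        by_cases h : ω ∈ E
        · simp [h]
        · simpa [h] using fun h2 => h (hsub h2)
      rw [e3]
      linarith
  have := key n le_rfl
  have h0 : 0 ≤ ∫ ω in {ω | ∀ i, i ≤ n → w i ω ≤ r}, Z n ω ∂μ :=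
    integral_nonneg fun ω => hZ0 n ω
  linarith

section meas
variable {H : Type*} [NormedAddCommGroup H] [InnerProductSpace ℝ H] {Ω : Type*}

theorem aux_meas (X : ℕ → Ω → H) (ρ : ℝ) (hρ : 0 < ρ)
    (Q Qinv : ℕ → Ω → H →L[ℝ] H)
    (hQpos : ∀ t ω, (Q t ω).IsPositive)
    (hQ0 : ∀ ω, Q 0 ω ∘L Q 0 ω = ρ • (1 : H →L[ℝ] H))
    (hQs : ∀ t ω, Q (t + 1) ω ∘L Q (t + 1) ω = Q t ω ∘L Q t ω + outerProd (X (t + 1) ω))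
    (hQinv : ∀ t ω, Qinv t ω ∘L Q t ω = 1 ∧ Q t ω ∘L Qinv t ω = 1)
    (m : MeasurableSpace Ω) (t : ℕ) (hX : ∀ i, 1 ≤ i → i ≤ t → StronglyMeasurable[m] (X i))
    (y : Ω → H) (hy : StronglyMeasurable[m] y) :
    StronglyMeasurable[m] (fun ω => Qinv t ω (Qinv t ω (y ω))) := by
  induction t generalizing y with
  | zero =>
    have : (fun ω => Qinv 0 ω (Qinv 0 ω (y ω))) = fun ω => ρ⁻¹ • y ω := by
      funext ω
      have h2 : ∀ y, Qinv 0 ω (Q 0 ω y) = y := fun y => by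
        have := congrArg (fun f : H →L[ℝ] H => f y) (hQinv 0 ω).1; simpa using this
      have h3 : Q 0 ω (Q 0 ω (ρ⁻¹ • y ω)) = y ω := by
        have := congrArg (fun f : H →L[ℝ] H => f (ρ⁻¹ • y ω)) (hQ0 ω)
        simp only [ContinuousLinearMap.comp_apply] at this
        rw [this]
        simp [smul_smul, hρ.ne']
      conv_lhs => rw [← h3, h2, h2]
    rw [this]
    exact hy.const_smul _
  | succ t ih =>
    have ih := ih (fun i h1 h2 => hX i h1 (by omega))
    have hx := hX (t + 1) (by omega) le_rfl
    have : (fun ω => Qinv (t + 1) ω (Qinv (t + 1) ω (y ω))) = fun ω =>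
      Qinv t ω (Qinv t ω (y ω)) - (⟪X (t + 1) ω, Qinv t ω (Qinv t ω (y ω))⟫ /
        (1 + ⟪X (t + 1) ω, Qinv t ω (Qinv t ω (X (t + 1) ω))⟫)) •
          Qinv t ω (Qinv t ω (X (t + 1) ω)) := by
      funext ω
      exact aux_SM _ _ _ _ (hQpos t ω) (hQinv t ω) (hQinv _ ω) _ (hQs t ω) _
    rw [this]
    exact (ih y hy).sub (((hx.inner (ih y hy)).div
      (stronglyMeasurable_const.add (hx.inner (ih _ hx)))).smul (ih _ hx))

theorem aux_meas_norm (X : ℕ → Ω → H) (ρ : ℝ) (hρ : 0 < ρ)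
    (Q Qinv : ℕ → Ω → H →L[ℝ] H)
    (hQpos : ∀ t ω, (Q t ω).IsPositive)
    (hQ0 : ∀ ω, Q 0 ω ∘L Q 0 ω = ρ • (1 : H →L[ℝ] H))
    (hQs : ∀ t ω, Q (t + 1) ω ∘L Q (t + 1) ω = Q t ω ∘L Q t ω + outerProd (X (t + 1) ω))
    (hQinv : ∀ t ω, Qinv t ω ∘L Q t ω = 1 ∧ Q t ω ∘L Qinv t ω = 1)
    (m : MeasurableSpace Ω) (t : ℕ) (hX : ∀ i, 1 ≤ i → i ≤ t → StronglyMeasurable[m] (X i))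
    (y : Ω → H) (hy : StronglyMeasurable[m] y) :
    StronglyMeasurable[m] (fun ω => ‖Qinv t ω (y ω)‖) := by
  have : (fun ω => ‖Qinv t ω (y ω)‖) = fun ω => √⟪y ω, Qinv t ω (Qinv t ω (y ω))⟫ := by
    funext ω
    rw [← aux_normsq _ _ (hQpos t ω) (hQinv t ω), Real.sqrt_sq (norm_nonneg _)]
  rw [this]
  exact Real.continuous_sqrt.comp_stronglyMeasurable
    (hy.inner (aux_meas X ρ hρ Q Qinv hQpos hQ0 hQs hQinv m t hX y hy))
end meas

theorem stmt_5
    {H : Type*} [NormedAddCommGroup H] [InnerProductSpace ℝ H] [CompleteSpace H]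
    [SecondCountableTopology H]
    {Ω : Type*} {m0 : MeasurableSpace Ω} {μ : Measure Ω} [IsProbabilityMeasure μ]
    (ℱ : Filtration ℕ m0)
    (X : ℕ → Ω → H) (ε : ℕ → Ω → ℝ)
    (hX : ∀ t, 1 ≤ t → StronglyMeasurable[ℱ (t - 1)] (X t))
    (hεmeas : ∀ t, 1 ≤ t → StronglyMeasurable[ℱ t] (ε t))
    (hεint : ∀ t, 1 ≤ t → Integrable (ε t) μ)
    (hε0 : ∀ t, 1 ≤ t → μ[ε t | ℱ (t - 1)] =ᵐ[μ] 0)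
    (ρ : ℝ) (hρ : 0 < ρ)
    (Q Qinv : ℕ → Ω → H →L[ℝ] H)
    (hQpos : ∀ t ω, (Q t ω).IsPositive)
    (hQsq : ∀ t ω, Q t ω ∘L Q t ω =
      ρ • (1 : H →L[ℝ] H) + ∑ i ∈ Finset.Icc 1 t, outerProd (X i ω))
    (hQinv : ∀ t ω, Qinv t ω ∘L Q t ω = 1 ∧ Q t ω ∘L Qinv t ω = 1)
    (n : ℕ) (hn : 1 ≤ n)
    (B : ℝ) (hB : 0 < B) (σ : ℕ → Ω → ℝ)
    (hσmeas : ∀ t, 1 ≤ t → t ≤ n → StronglyMeasurable[ℱ (t - 1)] (σ t))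
    (hbdd : ∀ t, 1 ≤ t → t ≤ n → ∀ᵐ ω ∂μ, |ε t ω| ≤ B)
    (hvar : ∀ t, 1 ≤ t → t ≤ n →
      μ[fun ω => (ε t ω - (μ[ε t | ℱ (t - 1)]) ω) ^ 2 | ℱ (t - 1)] ≤ᵐ[μ]
        fun ω => σ t ω ^ 2)
    (C : ℝ) (hC : 0 < C)
    (hCn : ∀ᵐ ω ∂μ, ∑ i ∈ Finset.Icc 1 n, σ i ω ^ 2 * ‖Qinv i ω (X i ω)‖ ^ 2 ≤ C ^ 2)
    (δ : ℝ) (hδ : δ ∈ Set.Ioo (0 : ℝ) 1)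
    (u : ℝ) (hu : 0 ≤ u)
    (hhu : (1 + u) * Real.log (1 + u) - u = (B ^ 2 / C ^ 2) * Real.log (2 / δ)) :
    ENNReal.ofReal (1 - δ) ≤
      μ {ω | ∀ t, 1 ≤ t → t ≤ n →
        ‖Qinv t ω (∑ i ∈ Finset.Icc 1 t, ε i ω • X i ω)‖ ≤ (C ^ 2 / B) * u} := by
  -- basic operator facts
  have hQ0 : ∀ ω, Q 0 ω ∘L Q 0 ω = ρ • (1 : H →L[ℝ] H) := fun ω => by
    rw [hQsq]; simp
  have hQs : ∀ t ω, Q (t + 1) ω ∘L Q (t + 1) ω = Q t ω ∘L Q t ω + outerProd (X (t + 1) ω) := by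
    intro t ω
    rw [hQsq, hQsq, Finset.sum_Icc_succ_top (by omega), add_assoc]
  have hX' : ∀ t i, 1 ≤ i → i ≤ t + 1 → StronglyMeasurable[ℱ t] (X i) := fun t i h1 h2 =>
    (hX i h1).mono (ℱ.mono (by omega))
  have hg1 : ∀ t ω, ‖Qinv (t + 1) ω (X (t + 1) ω)‖ ≤ 1 := fun t ω =>
    aux_G _ _ _ _ (hQpos t ω) (hQpos _ ω) (hQinv t ω) (hQinv _ ω) _ (hQs t ω)
  set N : ℕ → Ω → H := fun t ω => ∑ i ∈ Finset.Icc 1 t, ε i ω • X i ω with hN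
  have hNs : ∀ t ω, N (t + 1) ω = N t ω + ε (t + 1) ω • X (t + 1) ω := fun t ω => by
    simp only [hN]; rw [Finset.sum_Icc_succ_top (by omega)]
  have hNm : ∀ t, StronglyMeasurable[ℱ t] (N t) := by
    intro t
    refine Finset.stronglyMeasurable_fun_sum _ fun i hi => ?_
    rw [Finset.mem_Icc] at hi
    exact ((hεmeas i hi.1).mono (ℱ.mono hi.2)).smul (hX' t i hi.1 (by omega))
  set w : ℕ → Ω → ℝ := fun t ω => ‖Qinv t ω (N t ω)‖ with hw
  set a : ℕ → Ω → ℝ := fun t ω => ‖Qinv (t + 1) ω (N t ω)‖ with ha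
  have haw : ∀ t ω, a t ω ≤ w t ω := fun t ω =>
    aux_contr _ _ _ _ (hQpos t ω) (hQpos _ ω) (hQinv t ω) (hQinv _ ω) _ (hQs t ω) _
  have hwm : ∀ t, StronglyMeasurable[ℱ t] (w t) := fun t =>
    aux_meas_norm X ρ hρ Q Qinv hQpos hQ0 hQs hQinv (ℱ t) t
      (fun i h1 h2 => hX' t i h1 (by omega)) _ (hNm t)
  have ham : ∀ t, StronglyMeasurable[ℱ t] (a t) := fun t =>
    aux_meas_norm X ρ hρ Q Qinv hQpos hQ0 hQs hQinv (ℱ t) (t + 1)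
      (fun i h1 h2 => hX' t i h1 h2) _ (hNm t)
  have hgm : ∀ t, StronglyMeasurable[ℱ t] (fun ω => ‖Qinv (t + 1) ω (X (t + 1) ω)‖) := fun t =>
    aux_meas_norm X ρ hρ Q Qinv hQpos hQ0 hQs hQinv (ℱ t) (t + 1)
      (fun i h1 h2 => hX' t i h1 h2) _ (hX' t _ (by omega) le_rfl)
  have him : ∀ t, StronglyMeasurable[ℱ t]
      (fun ω => ⟪Qinv (t + 1) ω (N t ω), Qinv (t + 1) ω (X (t + 1) ω)⟫) := by
    intro t
    have : (fun ω => ⟪Qinv (t + 1) ω (N t ω), Qinv (t + 1) ω (X (t + 1) ω)⟫) =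
        fun ω => ⟪N t ω, Qinv (t + 1) ω (Qinv (t + 1) ω (X (t + 1) ω))⟫ := by
      funext ω
      exact aux_symm _ _ (hQpos _ ω) (hQinv _ ω) _ _
    rw [this]
    exact (hNm t).inner (aux_meas X ρ hρ Q Qinv hQpos hQ0 hQs hQinv (ℱ t) (t + 1)
      (fun i h1 h2 => hX' t i h1 h2) _ (hX' t _ (by omega) le_rfl))
  have hws : ∀ t ω, w (t + 1) ω =
      ‖Qinv (t + 1) ω (N t ω) + ε (t + 1) ω • Qinv (t + 1) ω (X (t + 1) ω)‖ := fun t ω => by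
    simp only [hw]
    rw [hNs, map_add, map_smul]
  have hall : ∀ᵐ ω ∂μ, ∀ t, 1 ≤ t → t ≤ n → |ε t ω| ≤ B := by
    rw [ae_all_iff]; intro t
    by_cases h : 1 ≤ t ∧ t ≤ n
    · filter_upwards [hbdd t h.1 h.2] with ω h' _ _ using h'
    · exact Eventually.of_forall fun ω h1 h2 => absurd ⟨h1, h2⟩ h
  have hwb : ∀ᵐ ω ∂μ, ∀ t, t ≤ n → w t ω ≤ t * B := by
    filter_upwards [hall] with ω hω t
    induction t with
    | zero => intro _; simp [hw, hN]
    | succ t ih =>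
      intro ht
      have ih := ih (by omega)
      rw [hws]
      refine (norm_add_le _ _).trans ?_
      rw [norm_smul, Real.norm_eq_abs]
      have h1 := haw t ω
      have h2 : |ε (t + 1) ω| * ‖Qinv (t + 1) ω (X (t + 1) ω)‖ ≤ B * 1 :=
        mul_le_mul (hω _ (by omega) ht) (hg1 t ω) (norm_nonneg _) hB.le
      simp only [ha] at h1
      push_cast
      linarith
  -- the supermartingale
  set l : ℝ := Real.log (1 + u) / B with hl
  have hl0 : 0 ≤ l := div_nonneg (Real.log_nonneg (by linarith)) hB.le
  set κ : ℝ := (exp (l * B) - 1 - l * B) / B ^ 2 with hκ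
  have hκ0 : 0 ≤ κ := by
    refine div_nonneg ?_ (by positivity)
    linarith [Real.add_one_le_exp (l * B)]
  set S : ℕ → Ω → ℝ := fun t ω => ∑ i ∈ Finset.Icc 1 t, σ i ω ^ 2 * ‖Qinv i ω (X i ω)‖ ^ 2 with hS
  have hS0 : ∀ t ω, 0 ≤ S t ω := fun t ω => Finset.sum_nonneg fun i _ => by positivity
  have hSs : ∀ t ω, S (t + 1) ω = S t ω +
      σ (t + 1) ω ^ 2 * ‖Qinv (t + 1) ω (X (t + 1) ω)‖ ^ 2 := fun t ω => by
    simp only [hS]; rw [Finset.sum_Icc_succ_top (by omega)]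
  have hSm : ∀ t, t < n → StronglyMeasurable[ℱ t] (S (t + 1)) := by
    intro t ht
    refine Finset.stronglyMeasurable_fun_sum _ fun i hi => ?_
    rw [Finset.mem_Icc] at hi
    obtain ⟨j, rfl⟩ : ∃ j, i = j + 1 := ⟨i - 1, by omega⟩
    have h1 := (hσmeas (j + 1) hi.1 (by omega)).mono (ℱ.mono (show j + 1 - 1 ≤ t by omega))
    have h2 := (hgm j).mono (ℱ.mono (show j ≤ t by omega))
    exact (h1.pow 2).mul (h2.pow 2)
  have hSm0 : ∀ t, t ≤ n → StronglyMeasurable (S t) := by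
    intro t ht
    rcases t with _ | t
    · simp only [hS, Finset.Icc_eq_empty_of_lt Nat.zero_lt_one, Finset.sum_empty]
      exact stronglyMeasurable_const
    · exact (hSm t ht).mono (ℱ.le t)
  have hD1 : ∀ t ω, exp (-κ * S t ω) ≤ 1 := fun t ω => by
    rw [Real.exp_le_one_iff]; nlinarith [mul_nonneg hκ0 (hS0 t ω)]
  set Z : ℕ → Ω → ℝ := fun t ω => exp (-κ * S t ω) * cosh (l * w t ω) with hZ
  have hw0 : ∀ t ω, 0 ≤ w t ω := fun t ω => norm_nonneg _
  have ha0 : ∀ t ω, 0 ≤ a t ω := fun t ω => norm_nonneg _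
  have hcm : ∀ x y : ℝ, 0 ≤ x → x ≤ y → cosh (l * x) ≤ cosh (l * y) := fun x y hx hxy => by
    rw [Real.cosh_le_cosh, abs_of_nonneg (by positivity),
      abs_of_nonneg (mul_nonneg hl0 (hx.trans hxy))]
    gcongr
  have hZi : ∀ t, t ≤ n → Integrable (Z t) μ := by
    intro t ht
    refine Integrable.of_bound (C := cosh (l * (t * B))) ?_ ?_
    · exact ((Real.continuous_exp.comp_stronglyMeasurable ((hSm0 t ht).const_mul (-κ))).mul
        (Real.continuous_cosh.comp_stronglyMeasurable
          (((hwm t).mono (ℱ.le t)).const_mul l))).aestronglyMeasurable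
    · filter_upwards [hwb] with ω h
      simp only [hZ]
      rw [Real.norm_eq_abs, abs_of_nonneg (mul_nonneg (exp_pos _).le (cosh_pos _).le)]
      have := hcm _ _ (hw0 t ω) (h t ht)
      have h2 := mul_le_mul (hD1 t ω) this (cosh_pos _).le zero_le_one
      linarith
  have hstep : ∀ t, t < n → ∀ E, MeasurableSet[ℱ t] E →
      ∫ ω in E, Z (t + 1) ω ∂μ ≤ ∫ ω in E, Z t ω ∂μ := by
    intro t ht E hE
    have mE : MeasurableSet E := ℱ.le t _ hE
    rw [← integral_indicator mE, ← integral_indicator mE]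
    have hDm : StronglyMeasurable[ℱ t] (fun ω => exp (-κ * S (t + 1) ω)) :=
      Real.continuous_exp.comp_stronglyMeasurable ((hSm t ht).const_mul (-κ))
    have hlam : StronglyMeasurable[ℱ t] (fun ω => l * a t ω) := (ham t).const_mul l
    have h0 := hε0 (t + 1) (by omega)
    have hv := hvar (t + 1) (by omega) ht
    rw [Nat.add_sub_cancel] at h0 hv
    have hv2 : μ[fun ω => ε (t + 1) ω ^ 2 | ℱ t] ≤ᵐ[μ] fun ω => σ (t + 1) ω ^ 2 := by
      refine EventuallyLE.trans (EventuallyEq.le (condExp_congr_ae ?_)) hv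
      filter_upwards [h0] with ω h
      rw [h]; simp
    refine aux_int (ℱ t) (ℱ.le t) (ε (t + 1)) (fun ω => σ (t + 1) ω ^ 2)
      (E.indicator fun ω => exp (-κ * S (t + 1) ω) * cosh (l * a t ω))
      (E.indicator fun ω => exp (-κ * S (t + 1) ω) * (sinh (l * a t ω) / (l * a t ω) *
        (l ^ 2 * ⟪Qinv (t + 1) ω (N t ω), Qinv (t + 1) ω (X (t + 1) ω)⟫)))
      (fun ω => κ * ‖Qinv (t + 1) ω (X (t + 1) ω)‖ ^ 2) _ _ B
      (cosh (l * (t * B))) (sinh (l * (t * B)) * l) κ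
      ?_ ?_ ?_ (hεint _ (by omega)) (hbdd _ (by omega) ht) h0 hv2 ?_ ?_ ?_ ?_ ?_
      ((hZi _ ht).indicator mE) ((hZi _ ht.le).indicator mE) ?_ ?_
    · exact (hDm.mul (Real.continuous_cosh.comp_stronglyMeasurable hlam)).indicator hE
    · exact (hDm.mul (((Real.continuous_sinh.comp_stronglyMeasurable hlam).div hlam).mul
        ((him t).const_mul (l ^ 2)))).indicator hE
    · exact ((hgm t).pow 2).const_mul κ
    · intro ω
      exact Set.indicator_nonneg (fun ω _ => mul_nonneg (exp_pos _).le (cosh_pos _).le) ω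
    · intro ω; positivity
    · filter_upwards [hwb] with ω h
      by_cases hω : ω ∈ E
      · rw [Set.indicator_of_mem hω,
          abs_of_nonneg (mul_nonneg (exp_pos _).le (cosh_pos _).le)]
        have := hcm _ _ (ha0 t ω) ((haw t ω).trans (h t ht.le))
        have h2 := mul_le_mul (hD1 (t + 1) ω) this (cosh_pos _).le zero_le_one
        linarith
      · rw [Set.indicator_of_notMem hω, abs_zero]; exact (cosh_pos _).le
    · filter_upwards [hwb] with ω h
      have htb : 0 ≤ l * (t * B) := by positivity
      by_cases hω : ω ∈ E
      · rw [Set.indicator_of_mem hω, abs_mul, abs_of_pos (exp_pos _)]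
        have hin : |⟪Qinv (t + 1) ω (N t ω), Qinv (t + 1) ω (X (t + 1) ω)⟫| ≤ a t ω := by
          refine (abs_real_inner_le_norm _ _).trans ?_
          exact mul_le_of_le_one_right (norm_nonneg _) (hg1 t ω)
        have hla : 0 ≤ l * a t ω := mul_nonneg hl0 (ha0 t ω)
        have hsn : 0 ≤ sinh (l * a t ω) := Real.sinh_nonneg_iff.2 hla
        have hsle : sinh (l * a t ω) ≤ sinh (l * (t * B)) := Real.sinh_le_sinh.2
          (mul_le_mul_of_nonneg_left ((haw t ω).trans (h t ht.le)) hl0)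
        have key : |sinh (l * a t ω) / (l * a t ω) *
            (l ^ 2 * ⟪Qinv (t + 1) ω (N t ω), Qinv (t + 1) ω (X (t + 1) ω)⟫)| ≤
            sinh (l * (t * B)) * l := by
          rw [abs_mul, abs_mul, abs_of_nonneg (div_nonneg hsn hla), abs_of_nonneg (sq_nonneg l)]
          calc _ ≤ sinh (l * a t ω) / (l * a t ω) * (l ^ 2 * a t ω) := by gcongr
            _ = sinh (l * a t ω) / (l * a t ω) * (l * a t ω) * l := by ring
            _ ≤ sinh (l * a t ω) * l := by
                gcongr
                rcases hla.eq_or_lt with h3 | h3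
                · rw [← h3]; simp
                · rw [div_mul_cancel₀ _ h3.ne']
            _ ≤ _ := by gcongr
        have h2 := mul_le_mul (hD1 (t + 1) ω) key (abs_nonneg _) zero_le_one
        linarith
      · rw [Set.indicator_of_notMem hω, abs_zero]
        exact mul_nonneg (Real.sinh_nonneg_iff.2 htb) hl0
    · intro ω
      have := hg1 t ω
      exact mul_le_of_le_one_right hκ0 (pow_le_one₀ (norm_nonneg _) this)
    · filter_upwards [hbdd (t + 1) (by omega) ht] with ω h
      by_cases hω : ω ∈ E
      · simp only [Set.indicator_of_mem hω, hZ]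
        have := aux_step (Qinv (t + 1) ω (N t ω)) (Qinv (t + 1) ω (X (t + 1) ω)) l B
          (ε (t + 1) ω) hl0 hB h (hg1 t ω)
        rw [← hws] at this
        have := mul_le_mul_of_nonneg_left this (exp_pos (-κ * S (t + 1) ω)).le
        refine this.trans (le_of_eq ?_)
        simp only [ha, hκ]
        ring
      · simp [Set.indicator_of_notMem hω]
    · intro ω
      by_cases hω : ω ∈ E
      · simp only [Set.indicator_of_mem hω, hZ]
        rw [hSs]
        set q := σ (t + 1) ω ^ 2 * ‖Qinv (t + 1) ω (X (t + 1) ω)‖ ^ 2 with hq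
        have hq0 : 0 ≤ q := by positivity
        have h1 : 1 + κ * q ≤ exp (κ * q) := by linarith [Real.add_one_le_exp (κ * q)]
        calc _ = exp (-κ * (S t ω + q)) * (cosh (l * a t ω) * (1 + κ * q)) := by
              rw [hq]; ring
          _ ≤ exp (-κ * (S t ω + q)) * (cosh (l * w t ω) * exp (κ * q)) := by
              have := hcm _ _ (ha0 t ω) (haw t ω)
              have := cosh_pos (l * w t ω)
              gcongr
          _ = exp (-κ * (S t ω + q)) * exp (κ * q) * cosh (l * w t ω) := by ring
          _ = _ := by rw [← Real.exp_add]; congr 2; ring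
      · simp [Set.indicator_of_notMem hω]
  have hr0 : 0 ≤ C ^ 2 / B * u := by positivity
  have hmax := aux_max ℱ n Z w (C ^ 2 / B * u) (exp (-κ * C ^ 2) * cosh (l * (C ^ 2 / B * u)))
    (mul_pos (exp_pos _) (cosh_pos _)) (fun t _ => hwm t)
    (fun t ω => mul_nonneg (exp_pos _).le (cosh_pos _).le) hZi hstep (by
      filter_upwards [hCn] with ω h t ht hr
      have h1 : S t ω ≤ C ^ 2 := by
        refine le_trans ?_ h
        exact Finset.sum_le_sum_of_subset_of_nonneg (Finset.Icc_subset_Icc_right ht)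
          (fun i _ _ => by positivity)
      have h2 := hcm _ _ hr0 hr.le
      simp only [hZ]
      refine mul_le_mul (Real.exp_le_exp.2 ?_) h2 (cosh_pos _).le (exp_pos _).le
      nlinarith) (fun ω => by simp [hZ, hS, hw, hN]) (fun ω => by
      simp only [hw, hN]
      simpa using hr0)
  set G := {ω | ∀ t, t ≤ n → w t ω ≤ C ^ 2 / B * u} with hG
  have mG : MeasurableSet G := by
    have : G = ⋂ i, ⋂ (_ : i ≤ n), {ω | w i ω ≤ C ^ 2 / B * u} := by
      ext; simp [hG]
    rw [this]
    refine MeasurableSet.iInter fun i => MeasurableSet.iInter fun hi => ?_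
    exact measurableSet_le ((hwm i).mono (ℱ.le i)).measurable measurable_const
  have hδ0 := hδ.1
  have hc : 1 / δ ≤ exp (-κ * C ^ 2) * cosh (l * (C ^ 2 / B * u)) := by
    have hlB : l * B = Real.log (1 + u) := by rw [hl]; field_simp
    have e1 : -κ * C ^ 2 + l * (C ^ 2 / B * u) = Real.log (2 / δ) := by
      have : Real.log (2 / δ) = C ^ 2 / B ^ 2 * ((1 + u) * Real.log (1 + u) - u) := by
        rw [hhu]; field_simp
      rw [this, hκ, hlB, Real.exp_log (by linarith), hl]
      field_simp
      ring
    have h1 : exp (l * (C ^ 2 / B * u)) / 2 ≤ cosh (l * (C ^ 2 / B * u)) := by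
      rw [Real.cosh_eq]
      have := exp_pos (-(l * (C ^ 2 / B * u)))
      linarith
    calc 1 / δ = exp (-κ * C ^ 2) * (exp (l * (C ^ 2 / B * u)) / 2) := by
          rw [← mul_div_assoc, ← Real.exp_add, e1, Real.exp_log (by positivity)]
          field_simp
      _ ≤ _ := by gcongr
  have hbad : μ.real Gᶜ ≤ δ := by
    have h1 := (mul_le_mul_of_nonneg_right hc (measureReal_nonneg (μ := μ) (s := Gᶜ))).trans hmax
    rw [div_mul_eq_mul_div, one_mul, div_le_one hδ0] at h1
    exact h1
  rw [probReal_compl_eq_one_sub mG] at hbad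
  calc ENNReal.ofReal (1 - δ) ≤ ENNReal.ofReal (μ.real G) :=
        ENNReal.ofReal_le_ofReal (by linarith)
    _ = μ G := ofReal_measureReal
    _ ≤ _ := by
        refine measure_mono ?_
        intro ω h t _ ht
        exact h t ht
end

section
/- Suppose |ε_t| ≤ B almost surely and Var(ε_t | F_{t-1}) ≤ σ_t² for all t ≥ 1, with σ_t F_{t-1}-measurable and B > 0. Let s_t = ‖(ρI + V_t)^{-1/2} M_t‖ and ν_t = Σ_{i=1}^t σ_i² ‖G_i‖². For a > 0 and x ≥ 0 let γ̄(a, x) = (∫_x^∞ u^{a−1} e^{−u} du) / Γ(a) denote the regularized upper incomplete gamma function. Then for any θ > 0 and δ ∈ (0,1), with probability at least 1 − δ it holds simultaneously for all t ≥ 1 that [ (θ/B²)^{θ/B²} / ( Γ(θ/B²) · γ̄(θ/B², θ/B²) ) ] · [ Γ((B s_t + ν_t + θ)/B²) · γ̄((B s_t + ν_t + θ)/B², (ν_t + θ)/B²) / ((ν_t + θ)/B²)^{(B s_t + ν_t + θ)/B²} ] · exp(ν_t / B²) < 2/δ. -/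
open MeasureTheory Filter Real
open scoped RealInnerProductSpace

noncomputable def upperGammaReg (a x : ℝ) : ℝ :=
  (∫ u in Set.Ioi x, u ^ (a - 1) * Real.exp (-u)) / Real.Gamma a

noncomputable def mixedBennettExpr (B θ ν s : ℝ) : ℝ :=
  ((θ / B ^ 2) ^ (θ / B ^ 2) /
      (Real.Gamma (θ / B ^ 2) * upperGammaReg (θ / B ^ 2) (θ / B ^ 2))) *
    (Real.Gamma ((B * s + ν + θ) / B ^ 2) *
        upperGammaReg ((B * s + ν + θ) / B ^ 2) ((ν + θ) / B ^ 2) /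
      ((ν + θ) / B ^ 2) ^ ((B * s + ν + θ) / B ^ 2)) *
    Real.exp (ν / B ^ 2)

lemma psi_scale {k l : ℝ} (hk0 : 0 ≤ k) (hk1 : k ≤ 1) (hl : 0 ≤ l) :
    Real.exp (k * l) - 1 - k * l ≤ k ^ 2 * (Real.exp l - 1 - l) := by
  have key : ∀ x : ℝ, HasSum (fun n : ℕ => x ^ (n + 2) / (Nat.factorial (n + 2) : ℝ)) (Real.exp x - 1 - x) := by
    intro x
    have h := NormedSpace.expSeries_div_hasSum_exp (𝔸 := ℝ) x
    rw [← Real.exp_eq_exp_ℝ] at h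
    have h2 := (hasSum_nat_add_iff' 2).mpr h
    simpa [Finset.sum_range_succ, sub_sub] using h2
  refine hasSum_le (fun n => ?_) (key (k * l)) ((key l).mul_left (k ^ 2))
  rw [mul_pow, mul_div_assoc]
  have : k ^ (n + 2) ≤ k ^ 2 := pow_le_pow_of_le_one hk0 hk1 (by omega)
  gcongr

lemma psi_nonneg' (l : ℝ) : 0 ≤ Real.exp l - 1 - l := by
  have := Real.add_one_le_exp l
  linarith

lemma cosh_convex_aux {x y z c : ℝ} (hc0 : 0 ≤ c) (hc1 : c ≤ 1)
    (h : z ^ 2 = (1 - c) * x ^ 2 + c * y ^ 2) :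
    Real.cosh z ≤ (1 - c) * Real.cosh x + c * Real.cosh y := by
  refine hasSum_le (fun n => ?_) (Real.hasSum_cosh z)
    (((Real.hasSum_cosh x).mul_left (1 - c)).add ((Real.hasSum_cosh y).mul_left c))
  have h1 := (convexOn_pow (𝕜 := ℝ) n).2 (Set.mem_Ici.mpr (sq_nonneg x)) (Set.mem_Ici.mpr (sq_nonneg y))
    (sub_nonneg.mpr hc1) hc0 (by ring)
  simp only [smul_eq_mul] at h1
  rw [pow_mul, pow_mul, pow_mul, h, mul_div_assoc', mul_div_assoc', ← add_div]
  gcongr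

lemma sinh_sub_nonneg {q : ℝ} (hq : 0 ≤ q) : 0 ≤ Real.sinh q - q := by
  have := Real.self_le_sinh_iff.mpr hq
  linarith

lemma cosh_pinelis {r p q z : ℝ} (hr : 0 ≤ r) (hp : |p| ≤ q) (hz : z ^ 2 = r ^ 2 + 2 * (r * p) + q ^ 2) :
    Real.cosh z ≤ Real.cosh r + Real.sinh r * p + Real.cosh r * (Real.exp q - 1 - q) := by
  have hq : 0 ≤ q := (abs_nonneg p).trans hp
  have e1 : Real.exp q = Real.cosh q + Real.sinh q := (Real.cosh_add_sinh q).symm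
  have hs := sinh_sub_nonneg hq
  have hsr : 0 ≤ Real.sinh r := Real.sinh_nonneg_iff.mpr hr
  have hcs : Real.sinh r ≤ Real.cosh r := (Real.sinh_lt_cosh r).le
  rcases hq.eq_or_lt with h0 | h0
  · have hp0 : p = 0 := by
      rw [← h0] at hp
      exact abs_nonpos_iff.mp hp
    subst hp0
    subst h0
    have : Real.cosh z = Real.cosh r := by
      rw [← Real.cosh_abs z, ← Real.cosh_abs r]
      congr 1
      exact (sq_eq_sq_iff_abs_eq_abs _ _).mp (by linarith)
    rw [this]; simp
  · obtain ⟨hp1, hp2⟩ := abs_le.mp hp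
    set c := (p + q) / (2 * q) with hc
    have hpc : p = (2 * c - 1) * q := by rw [hc]; field_simp; ring
    have hc0 : 0 ≤ c := div_nonneg (by linarith) (by linarith)
    have hc1 : c ≤ 1 := by rw [hc, div_le_one (by linarith)]; linarith
    have h1 := cosh_convex_aux (x := r - q) (y := r + q) (z := z) hc0 hc1 (by rw [hz, hpc]; ring)
    refine h1.trans ?_
    rw [Real.cosh_add, Real.cosh_sub, e1, hpc]
    nlinarith [mul_nonneg (mul_nonneg hc0 hs) (sub_nonneg.mpr hcs),
      mul_nonneg (mul_nonneg (sub_nonneg.mpr hc1) hs) (add_nonneg hsr (hsr.trans hcs))]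

lemma cosh_norm_step {H : Type*} [NormedAddCommGroup H] [InnerProductSpace ℝ H]
    (m g : H) (e B l : ℝ) (hB : 0 < B) (hl : 0 ≤ l) (he : |e| ≤ B) (hg : ‖g‖ ≤ 1) :
    Real.cosh (l * ‖m + e • g‖ / B) ≤
      Real.cosh (l * ‖m‖ / B) + Real.sinh (l * ‖m‖ / B) * (l / B * (inner ℝ m g / ‖m‖)) * e
      + Real.cosh (l * ‖m‖ / B) * (‖g‖ ^ 2 / B ^ 2 * (Real.exp l - 1 - l)) * e ^ 2 := by
  set k := |e| * ‖g‖ / B with hk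
  have hk0 : 0 ≤ k := by positivity
  have hk1 : k ≤ 1 := by
    rw [hk, div_le_one hB]
    calc |e| * ‖g‖ ≤ B * 1 := by gcongr
      _ = B := mul_one B
  have hin : ‖m‖ * (inner ℝ m g / ‖m‖) = inner ℝ m g := by
    by_cases h : m = 0
    · simp [h]
    · have : ‖m‖ ≠ 0 := norm_ne_zero_iff.mpr h
      field_simp
  have hab : |inner ℝ m g / ‖m‖| ≤ ‖g‖ := by
    rw [abs_div, abs_norm]
    apply div_le_of_le_mul₀ (norm_nonneg _) (norm_nonneg _)
    rw [mul_comm]; exact abs_real_inner_le_norm m g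
  have h1 := cosh_pinelis (r := l * ‖m‖ / B) (p := l / B * (inner ℝ m g / ‖m‖) * e) (q := k * l)
    (z := l * ‖m + e • g‖ / B) (by positivity) ?_ ?_
  · refine h1.trans ?_
    have h2 := psi_scale hk0 hk1 hl
    have h3 : k ^ 2 = ‖g‖ ^ 2 / B ^ 2 * e ^ 2 := by
      rw [hk, div_pow, mul_pow, sq_abs]; ring
    have h4 := mul_le_mul_of_nonneg_left h2 (Real.cosh_pos (l * ‖m‖ / B)).le
    rw [h3] at h4
    linarith
  · rw [abs_mul, abs_mul, abs_of_nonneg (by positivity : 0 ≤ l / B)]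
    calc l / B * |inner ℝ m g / ‖m‖| * |e| ≤ l / B * ‖g‖ * |e| := by gcongr
      _ = k * l := by rw [hk]; ring
  · have : ‖m + e • g‖ ^ 2 = ‖m‖ ^ 2 + 2 * (e * inner ℝ m g) + e ^ 2 * ‖g‖ ^ 2 := by
      rw [norm_add_sq_real, real_inner_smul_right, norm_smul, mul_pow, Real.norm_eq_abs, sq_abs]
    have h2 : (k * l) ^ 2 = e ^ 2 * ‖g‖ ^ 2 / B ^ 2 * l ^ 2 := by
      rw [hk, mul_pow, div_pow, mul_pow, sq_abs]
    have h3 : l * ‖m‖ / B * (l / B * (inner ℝ m g / ‖m‖) * e)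
        = l ^ 2 / B ^ 2 * e * (‖m‖ * (inner ℝ m g / ‖m‖)) := by ring
    rw [h2, h3, hin, div_pow, mul_pow, this]
    ring

lemma ville_aux {Ω : Type*} {m0 : MeasurableSpace Ω} {μ : Measure Ω}
    (ℱ : Filtration ℕ m0) (Z : ℕ → Ω → ENNReal) (hmeas : ∀ n, Measurable[ℱ n] (Z n))
    (hstep : ∀ n A, MeasurableSet[ℱ n] A → ∫⁻ ω in A, Z (n + 1) ω ∂μ ≤ ∫⁻ ω in A, Z n ω ∂μ)
    (c : ENNReal) : c * μ {ω | ∃ n, c ≤ Z n ω} ≤ ∫⁻ ω, Z 0 ω ∂μ := by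
  set A : ℕ → Set Ω := fun n => {ω | ∀ k ≤ n, Z k ω < c} with hA
  have hAm : ∀ n, MeasurableSet[ℱ n] (A n) := by
    intro n
    have : A n = ⋂ k, ⋂ (_ : k ≤ n), {ω | Z k ω < c} := by ext; simp [hA]
    rw [this]
    refine MeasurableSet.iInter fun k => MeasurableSet.iInter fun hk => ?_
    exact ℱ.mono hk _ (hmeas k measurableSet_Iio)
  have hAm0 : ∀ n, MeasurableSet (A n) := fun n => ℱ.le n _ (hAm n)
  have hZm : ∀ n, Measurable (Z n) := fun n => (hmeas n).mono (ℱ.le n) le_rfl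
  have main : ∀ n, c * μ (A n)ᶜ + ∫⁻ ω in A n, Z n ω ∂μ ≤ ∫⁻ ω, Z 0 ω ∂μ := by
    intro n
    induction n with
    | zero =>
      rw [← lintegral_add_compl (μ := μ) (Z 0) (hAm0 0), add_comm (c * μ (A 0)ᶜ)]
      refine add_le_add le_rfl ?_
      rw [← setLIntegral_const]
      refine setLIntegral_mono (hZm 0) fun ω hω => ?_
      simpa [hA] using hω
    | succ n ih =>
      refine le_trans ?_ ih
      have hsub : A (n + 1) ⊆ A n := fun ω hω k hk => hω k (by omega)
      have h1 : ∫⁻ ω in A n, Z n ω ∂μ ≥ ∫⁻ ω in A (n+1), Z (n+1) ω ∂μ + ∫⁻ ω in A n \ A (n+1), Z (n+1) ω ∂μ := by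
        refine le_trans (le_of_eq ?_) (hstep n _ (hAm n))
        rw [← lintegral_inter_add_sdiff (μ := μ) (Z (n+1)) (A n) (hAm0 (n+1)), Set.inter_eq_right.mpr hsub]
      have h2 : c * μ (A n \ A (n+1)) ≤ ∫⁻ ω in A n \ A (n+1), Z (n+1) ω ∂μ := by
        rw [← setLIntegral_const]
        refine setLIntegral_mono (hZm _) fun ω hω => ?_
        obtain ⟨ha, hb⟩ := hω
        by_contra hlt
        push Not at hlt
        refine hb fun k hk => ?_
        rcases Nat.le_succ_iff.mp hk with h | h
        · exact ha k h
        · exact h ▸ hlt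
      have h3 : μ (A (n+1))ᶜ ≤ μ (A n)ᶜ + μ (A n \ A (n+1)) := by
        refine le_trans (measure_mono ?_) (measure_union_le _ _)
        intro ω hω
        by_cases h : ω ∈ A n
        · exact Or.inr ⟨h, hω⟩
        · exact Or.inl h
      calc _ ≤ c * (μ (A n)ᶜ + μ (A n \ A (n+1))) + ∫⁻ ω in A (n+1), Z (n+1) ω ∂μ := by gcongr
        _ = c * μ (A n)ᶜ + (∫⁻ ω in A (n+1), Z (n+1) ω ∂μ + c * μ (A n \ A (n+1))) := by ring
        _ ≤ _ := by
          gcongr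
          exact le_trans (by gcongr) h1
  have hU : {ω | ∃ n, c ≤ Z n ω} = ⋃ n, (A n)ᶜ := by
    ext ω
    simp only [hA, Set.mem_ofPred_eq, Set.mem_iUnion, Set.mem_compl_iff, not_forall, not_lt]
    exact ⟨fun ⟨n, h⟩ => ⟨n, n, le_rfl, h⟩, fun ⟨n, k, _, h⟩ => ⟨k, h⟩⟩
  have hmono : Monotone fun n => (A n)ᶜ := by
    intro i j hij
    refine Set.compl_subset_compl.mpr fun ω hω k hk => hω k (hk.trans hij)
  rw [hU, hmono.measure_iUnion, ENNReal.mul_iSup]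
  exact iSup_le fun n => le_trans le_self_add (main n)

lemma cond_step {Ω : Type*} {m m0 : MeasurableSpace Ω} (hm : m ≤ m0) {μ : Measure Ω}
    [IsProbabilityMeasure μ] {a b c Y W e s2 : Ω → ℝ} {K B : ℝ}
    (ha : StronglyMeasurable[m] a) (hb : StronglyMeasurable[m] b) (hc : StronglyMeasurable[m] c)
    (hak : ∀ᵐ ω ∂μ, ‖a ω‖ ≤ K) (hbk : ∀ᵐ ω ∂μ, ‖b ω‖ ≤ K) (hck : ∀ᵐ ω ∂μ, ‖c ω‖ ≤ K)
    (hc0 : ∀ ω, 0 ≤ c ω)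
    (he : Integrable e μ) (heB : ∀ᵐ ω ∂μ, |e ω| ≤ B)
    (h0 : μ[e | m] =ᵐ[μ] 0) (hv : μ[fun ω => e ω ^ 2 | m] ≤ᵐ[μ] s2)
    (hY : Integrable Y μ) (hW : Integrable W μ) (hY0 : ∀ ω, 0 ≤ Y ω) (hW0 : ∀ ω, 0 ≤ W ω)
    (hYle : ∀ᵐ ω ∂μ, Y ω ≤ a ω + b ω * e ω + c ω * e ω ^ 2)
    (hWge : ∀ᵐ ω ∂μ, a ω + c ω * s2 ω ≤ W ω)
    {A : Set Ω} (hA : MeasurableSet[m] A) :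
    ∫⁻ ω in A, ENNReal.ofReal (Y ω) ∂μ ≤ ∫⁻ ω in A, ENNReal.ofReal (W ω) ∂μ := by
  have he2 : Integrable (fun ω => e ω ^ 2) μ := by
    refine Integrable.of_bound (he.aestronglyMeasurable.pow 2) (B ^ 2) ?_
    filter_upwards [heB] with ω h
    rw [Real.norm_eq_abs, abs_pow]
    gcongr
  have hai : Integrable a μ := Integrable.of_bound (ha.mono hm).aestronglyMeasurable K hak
  have hbi : Integrable (b * e) μ := he.bdd_mul (hb.mono hm).aestronglyMeasurable hbk
  have hci : Integrable (c * fun ω => e ω ^ 2) μ := he2.bdd_mul (hc.mono hm).aestronglyMeasurable hck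
  have hU : Integrable (a + b * e + c * fun ω => e ω ^ 2) μ := (hai.add hbi).add hci
  have h1 : μ[b * e | m] =ᵐ[μ] b * μ[e | m] := condExp_mul_of_stronglyMeasurable_left hb hbi he
  have h2 : μ[c * fun ω => e ω ^ 2 | m] =ᵐ[μ] c * μ[fun ω => e ω ^ 2 | m] :=
    condExp_mul_of_stronglyMeasurable_left hc hci he2
  have h3 : μ[a | m] = a := condExp_of_stronglyMeasurable hm ha hai
  have h4 : μ[a + b * e + c * fun ω => e ω ^ 2 | m] ≤ᵐ[μ] W := by
    filter_upwards [condExp_add (hai.add hbi) hci m, condExp_add hai hbi m, h1, h2, h0, hv, hWge]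
      with ω e1 e2 e3 e4 e5 e6 e7
    rw [e1, Pi.add_apply, e2, Pi.add_apply, e3, e4, Pi.mul_apply, Pi.mul_apply, h3, e5]
    have := mul_le_mul_of_nonneg_left e6 (hc0 ω)
    simp only [Pi.zero_apply, mul_zero, add_zero]
    linarith
  rw [← ofReal_integral_eq_lintegral_ofReal hY.integrableOn (ae_of_all _ hY0),
    ← ofReal_integral_eq_lintegral_ofReal hW.integrableOn (ae_of_all _ hW0)]
  refine ENNReal.ofReal_le_ofReal ?_
  calc ∫ ω in A, Y ω ∂μ ≤ ∫ ω in A, (a + b * e + c * fun ω => e ω ^ 2) ω ∂μ :=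
        integral_mono_ae hY.integrableOn hU.integrableOn (ae_restrict_of_ae hYle)
    _ = ∫ ω in A, (μ[a + b * e + c * fun ω => e ω ^ 2 | m]) ω ∂μ := (setIntegral_condExp hm hU hA).symm
    _ ≤ ∫ ω in A, W ω ∂μ :=
        integral_mono_ae integrable_condExp.integrableOn hW.integrableOn (ae_restrict_of_ae h4)

lemma inv_symm_aux {H : Type*} [NormedAddCommGroup H] [InnerProductSpace ℝ H] [CompleteSpace H]
    {Q P : H →L[ℝ] H} (hQ : Q.IsPositive) (h : Q ∘L P = 1) (u v : H) :
    inner ℝ (P u) v = inner ℝ u (P v) := by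
  have e : ∀ z, Q (P z) = z := fun z => by
    have := congrArg (fun T : H →L[ℝ] H => T z) h
    simpa using this
  have := hQ.isSymmetric (P u) (P v)
  simp only [ContinuousLinearMap.coe_coe, e] at this
  exact this.symm

lemma sherman {H : Type*} [NormedAddCommGroup H] [InnerProductSpace ℝ H]
    {W S S' : H → H} (x : H)
    (hS'add : ∀ u v, S' (u + v) = S' u + S' v) (hS'smul : ∀ (k : ℝ) u, S' (k • u) = k • S' u)
    (hWS : ∀ y, W (S y) = y) (hS'W : ∀ y, S' (W y + inner ℝ x y • x) = y)
    (hpos : 0 ≤ inner ℝ x (S x)) (y : H) :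
    S' y = S y - (inner ℝ x (S y) / (1 + inner ℝ x (S x))) • S x := by
  have key : ∀ y, S y = S' y + inner ℝ x (S y) • S' x := by
    intro y
    have := hS'W (S y)
    rw [hWS, hS'add, hS'smul] at this
    exact this.symm
  have hne : 1 + inner ℝ x (S x) ≠ 0 := by positivity
  have hx : S x = (1 + inner ℝ x (S x)) • S' x := by
    rw [add_smul, one_smul]; exact key x
  have h2 : (inner ℝ x (S y) / (1 + inner ℝ x (S x))) • S x = inner ℝ x (S y) • S' x := by
    generalize inner ℝ x (S x) = c at hx hne ⊢
    rw [hx, smul_smul, div_mul_cancel₀ _ hne]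
  rw [h2]
  exact eq_sub_of_add_eq (key y).symm

lemma inner_PP
    {H : Type*} [NormedAddCommGroup H] [InnerProductSpace ℝ H] [CompleteSpace H]
    {Q P : ℕ → H →L[ℝ] H}
    (hQpos : ∀ t, (Q t).IsPositive)
    (hQinv : ∀ t, P t ∘L Q t = 1 ∧ Q t ∘L P t = 1)
    (t : ℕ) (u v : H) : inner ℝ (P t u) (P t v) = inner ℝ u (P t (P t v)) :=
  inv_symm_aux (hQpos t) (hQinv t).2 u _

lemma PP_succ
    {H : Type*} [NormedAddCommGroup H] [InnerProductSpace ℝ H] [CompleteSpace H]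
    {ρ : ℝ} {X : ℕ → H} {Q P : ℕ → H →L[ℝ] H}
    (hQpos : ∀ t, (Q t).IsPositive)
    (hQsq : ∀ t, Q t ∘L Q t = ρ • (1 : H →L[ℝ] H) + ∑ i ∈ Finset.Icc 1 t, outerProd (X i))
    (hQinv : ∀ t, P t ∘L Q t = 1 ∧ Q t ∘L P t = 1)
    (t : ℕ) (y : H) : P (t + 1) (P (t + 1) y) = P t (P t y) -
    (inner ℝ (X (t + 1)) (P t (P t y)) / (1 + inner ℝ (X (t + 1)) (P t (P t (X (t + 1)))))) •
      P t (P t (X (t + 1))) := by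
  have e1 : ∀ t z, Q t (P t z) = z := fun t z => by
    simpa using congrArg (fun T : H →L[ℝ] H => T z) (hQinv t).2
  have e2 : ∀ t z, P t (Q t z) = z := fun t z => by
    simpa using congrArg (fun T : H →L[ℝ] H => T z) (hQinv t).1
  have e3 : ∀ z, Q (t + 1) (Q (t + 1) z) = Q t (Q t z) + inner ℝ (X (t + 1)) z • X (t + 1) := by
    intro z
    have h1 := congrArg (fun T : H →L[ℝ] H => T z) (hQsq t)
    have h2 := congrArg (fun T : H →L[ℝ] H => T z) (hQsq (t + 1))
    rw [Finset.sum_Icc_succ_top (by omega), ← add_assoc] at h2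
    simp only [ContinuousLinearMap.comp_apply, _root_.add_apply] at h1 h2
    rw [h2, h1]
    simp [outerProd]
  refine sherman (W := fun z => Q t (Q t z)) (S := fun z => P t (P t z))
    (S' := fun z => P (t + 1) (P (t + 1) z)) (X (t + 1)) ?_ ?_ ?_ ?_ ?_ y
  · intro u v; simp
  · intro k u; simp
  · intro y; simp [e1]
  · intro y
    simp only [← e3, e2]
  · rw [← inner_PP hQpos hQinv]
    exact real_inner_self_nonneg

lemma norm_P_succ_le
    {H : Type*} [NormedAddCommGroup H] [InnerProductSpace ℝ H] [CompleteSpace H]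
    {ρ : ℝ} {X : ℕ → H} {Q P : ℕ → H →L[ℝ] H}
    (hQpos : ∀ t, (Q t).IsPositive)
    (hQsq : ∀ t, Q t ∘L Q t = ρ • (1 : H →L[ℝ] H) + ∑ i ∈ Finset.Icc 1 t, outerProd (X i))
    (hQinv : ∀ t, P t ∘L Q t = 1 ∧ Q t ∘L P t = 1)
    (t : ℕ) (y : H) : ‖P (t + 1) y‖ ≤ ‖P t y‖ := by
  have h := PP_succ hQpos hQsq hQinv t y
  have e := congrArg (fun z => inner ℝ y z) h
  simp only [inner_sub_right, real_inner_smul_right] at e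
  have e' : inner ℝ y (P t (P t (X (t + 1)))) = inner ℝ (X (t + 1)) (P t (P t y)) := by
    rw [← inner_PP hQpos hQinv, ← inner_PP hQpos hQinv, real_inner_comm]
  rw [e', ← inner_PP hQpos hQinv, ← inner_PP hQpos hQinv, ← inner_PP hQpos hQinv, ← inner_PP hQpos hQinv,
    real_inner_self_eq_norm_sq, real_inner_self_eq_norm_sq, real_inner_self_eq_norm_sq] at e
  have : 0 ≤ inner ℝ (P t (X (t + 1))) (P t y) / (1 + ‖P t (X (t + 1))‖ ^ 2) *
    inner ℝ (P t (X (t + 1))) (P t y) := by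
    rw [div_mul_eq_mul_div]
    exact div_nonneg (mul_self_nonneg _) (by positivity)
  exact le_of_sq_le_sq (by linarith) (norm_nonneg _)

lemma norm_G_le
    {H : Type*} [NormedAddCommGroup H] [InnerProductSpace ℝ H] [CompleteSpace H]
    {ρ : ℝ} {X : ℕ → H} {Q P : ℕ → H →L[ℝ] H}
    (hQpos : ∀ t, (Q t).IsPositive)
    (hQsq : ∀ t, Q t ∘L Q t = ρ • (1 : H →L[ℝ] H) + ∑ i ∈ Finset.Icc 1 t, outerProd (X i))
    (hQinv : ∀ t, P t ∘L Q t = 1 ∧ Q t ∘L P t = 1)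
    (t : ℕ) : ‖P (t + 1) (X (t + 1))‖ ≤ 1 := by
  have h := PP_succ hQpos hQsq hQinv t (X (t + 1))
  have e := congrArg (fun z => inner ℝ (X (t + 1)) z) h
  simp only [inner_sub_right, real_inner_smul_right] at e
  rw [← inner_PP hQpos hQinv, ← inner_PP hQpos hQinv, 
    real_inner_self_eq_norm_sq, real_inner_self_eq_norm_sq] at e
  set c := ‖P t (X (t + 1))‖ ^ 2
  have hc : 0 ≤ c := by positivity
  have h2 : ‖P (t + 1) (X (t + 1))‖ ^ 2 ≤ 1 := by
    rw [e]
    have : c - c / (1 + c) * c = c / (1 + c) := by field_simp; ring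
    rw [this, div_le_one (by positivity)]; linarith
  exact (sq_le_one_iff₀ (norm_nonneg _)).mp h2

lemma PP_zero
    {H : Type*} [NormedAddCommGroup H] [InnerProductSpace ℝ H]
    {ρ : ℝ} {X : ℕ → H} {Q P : ℕ → H →L[ℝ] H}
    (hQsq : ∀ t, Q t ∘L Q t = ρ • (1 : H →L[ℝ] H) + ∑ i ∈ Finset.Icc 1 t, outerProd (X i))
    (hQinv : ∀ t, P t ∘L Q t = 1 ∧ Q t ∘L P t = 1)
    (hρ : 0 < ρ) (y : H) : P 0 (P 0 y) = ρ⁻¹ • y := by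
  have e2 : ∀ t z, P t (Q t z) = z := fun t z => by
    simpa using congrArg (fun T : H →L[ℝ] H => T z) (hQinv t).1
  have h2 := congrArg (fun T : H →L[ℝ] H => T (ρ⁻¹ • y)) (hQsq 0)
  simp only [ContinuousLinearMap.comp_apply] at h2
  have : Q 0 (Q 0 (ρ⁻¹ • y)) = y := by
    rw [h2]; simp [smul_smul, hρ.ne']
  conv_lhs => rw [← this]
  rw [e2, e2]

lemma PP_meas {H : Type*} [NormedAddCommGroup H] [InnerProductSpace ℝ H] [CompleteSpace H]
    {Ω : Type*} {ρ : ℝ} (hρ : 0 < ρ) {X : ℕ → Ω → H} {Q P : ℕ → Ω → H →L[ℝ] H}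
    (hQpos : ∀ t ω, (Q t ω).IsPositive)
    (hQsq : ∀ t ω, Q t ω ∘L Q t ω = ρ • (1 : H →L[ℝ] H) + ∑ i ∈ Finset.Icc 1 t, outerProd (X i ω))
    (hQinv : ∀ t ω, P t ω ∘L Q t ω = 1 ∧ Q t ω ∘L P t ω = 1)
    (m : MeasurableSpace Ω) (t : ℕ) (hX : ∀ i, 1 ≤ i → i ≤ t → StronglyMeasurable[m] (X i))
    (Y : Ω → H) (hY : StronglyMeasurable[m] Y) :
    StronglyMeasurable[m] (fun ω => P t ω (P t ω (Y ω))) := by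
  induction t generalizing Y with
  | zero =>
    have : (fun ω => P 0 ω (P 0 ω (Y ω))) = fun ω => ρ⁻¹ • Y ω := by
      ext1 ω
      exact PP_zero (fun t => hQsq t ω) (fun t => hQinv t ω) hρ (Y ω)
    rw [this]
    exact hY.const_smul _
  | succ t ih =>
    have hX' : ∀ i, 1 ≤ i → i ≤ t → StronglyMeasurable[m] (X i) := fun i h1 h2 => hX i h1 (by omega)
    have hx := hX (t + 1) (by omega) le_rfl
    have h1 := ih hX' Y hY
    have h2 := ih hX' _ hx
    have : (fun ω => P (t + 1) ω (P (t + 1) ω (Y ω))) = fun ω => P t ω (P t ω (Y ω)) -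
      (inner ℝ (X (t + 1) ω) (P t ω (P t ω (Y ω))) / (1 + inner ℝ (X (t + 1) ω) (P t ω (P t ω (X (t + 1) ω))))) •
      P t ω (P t ω (X (t + 1) ω)) := by
      ext1 ω
      exact PP_succ (fun t => hQpos t ω) (fun t => hQsq t ω) (fun t => hQinv t ω) t (Y ω)
    rw [this]
    have hd : StronglyMeasurable[m] (fun ω => inner ℝ (X (t + 1) ω) (P t ω (P t ω (Y ω))) / (1 + inner ℝ (X (t + 1) ω) (P t ω (P t ω (X (t + 1) ω))))) := by
      exact ((hx.inner h1).measurable.div (stronglyMeasurable_const.add (hx.inner h2)).measurable).stronglyMeasurable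
    exact h1.sub (hd.smul h2)

lemma P_inner_meas {H : Type*} [NormedAddCommGroup H] [InnerProductSpace ℝ H] [CompleteSpace H]
    {Ω : Type*} {ρ : ℝ} (hρ : 0 < ρ) {X : ℕ → Ω → H} {Q P : ℕ → Ω → H →L[ℝ] H}
    (hQpos : ∀ t ω, (Q t ω).IsPositive)
    (hQsq : ∀ t ω, Q t ω ∘L Q t ω = ρ • (1 : H →L[ℝ] H) + ∑ i ∈ Finset.Icc 1 t, outerProd (X i ω))
    (hQinv : ∀ t ω, P t ω ∘L Q t ω = 1 ∧ Q t ω ∘L P t ω = 1)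
    (m : MeasurableSpace Ω) (t : ℕ) (hX : ∀ i, 1 ≤ i → i ≤ t → StronglyMeasurable[m] (X i))
    (Y Z : Ω → H) (hY : StronglyMeasurable[m] Y) (hZ : StronglyMeasurable[m] Z) :
    StronglyMeasurable[m] (fun ω => inner ℝ (P t ω (Y ω)) (P t ω (Z ω))) := by
  have : (fun ω => inner ℝ (P t ω (Y ω)) (P t ω (Z ω))) = fun ω => inner ℝ (Y ω) (P t ω (P t ω (Z ω))) := by
    ext1 ω
    exact inner_PP (fun t => hQpos t ω) (fun t => hQinv t ω) t _ _
  rw [this]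
  exact hY.inner (PP_meas hρ hQpos hQsq hQinv m t hX Z hZ)

lemma P_norm_meas {H : Type*} [NormedAddCommGroup H] [InnerProductSpace ℝ H] [CompleteSpace H]
    {Ω : Type*} {ρ : ℝ} (hρ : 0 < ρ) {X : ℕ → Ω → H} {Q P : ℕ → Ω → H →L[ℝ] H}
    (hQpos : ∀ t ω, (Q t ω).IsPositive)
    (hQsq : ∀ t ω, Q t ω ∘L Q t ω = ρ • (1 : H →L[ℝ] H) + ∑ i ∈ Finset.Icc 1 t, outerProd (X i ω))
    (hQinv : ∀ t ω, P t ω ∘L Q t ω = 1 ∧ Q t ω ∘L P t ω = 1)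
    (m : MeasurableSpace Ω) (t : ℕ) (hX : ∀ i, 1 ≤ i → i ≤ t → StronglyMeasurable[m] (X i))
    (Y : Ω → H) (hY : StronglyMeasurable[m] Y) :
    StronglyMeasurable[m] (fun ω => ‖P t ω (Y ω)‖) := by
  have : (fun ω => ‖P t ω (Y ω)‖) = fun ω => Real.sqrt (inner ℝ (P t ω (Y ω)) (P t ω (Y ω))) := by
    ext1 ω
    rw [real_inner_self_eq_norm_sq, Real.sqrt_sq (norm_nonneg _)]
  rw [this]
  exact Real.continuous_sqrt.comp_stronglyMeasurable (P_inner_meas hρ hQpos hQsq hQinv m t hX Y Y hY hY)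

noncomputable def bennettL (B l s ν : ℝ) : ℝ :=
  Real.cosh (l * s / B) * Real.exp (-(ν / B ^ 2 * (Real.exp l - 1 - l)))

noncomputable def bennettW (a l : ℝ) : ℝ := Real.exp (a * (l - Real.exp l))

lemma gamma_tail {v : ℝ} (hv : 0 < v) (k : ℝ) :
    ∫ u in Set.Ioi v, u ^ (k - 1) * Real.exp (-u) =
      v ^ k * ∫ l in Set.Ioi (0 : ℝ), Real.exp (k * l - v * Real.exp l) := by
  have himg : (fun l : ℝ => v * Real.exp l) '' Set.Ioi 0 = Set.Ioi v := by
    ext u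
    simp only [Set.mem_image, Set.mem_Ioi]
    constructor
    · rintro ⟨l, hl, rfl⟩
      have := Real.one_lt_exp_iff.mpr hl
      nlinarith
    · intro hu
      refine ⟨Real.log (u / v), Real.log_pos ((one_lt_div hv).mpr hu), ?_⟩
      rw [Real.exp_log (div_pos (hv.trans hu) hv)]
      field_simp
  have h := integral_image_eq_integral_abs_deriv_smul (s := Set.Ioi (0 : ℝ))
    (f := fun l : ℝ => v * Real.exp l) (f' := fun l : ℝ => v * Real.exp l) measurableSet_Ioi
    (fun x _ => ((Real.hasDerivAt_exp x).const_mul v).hasDerivWithinAt)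
    (fun x _ y _ hxy => Real.exp_injective (mul_left_cancel₀ hv.ne' hxy))
    (fun u => u ^ (k - 1) * Real.exp (-u))
  rw [himg] at h
  rw [h, ← integral_const_mul]
  refine setIntegral_congr_fun measurableSet_Ioi fun l _ => ?_
  have hpos : 0 < v * Real.exp l := by positivity
  simp only [smul_eq_mul]
  rw [abs_of_pos hpos, Real.rpow_sub_one hpos.ne', Real.mul_rpow hv.le (Real.exp_pos l).le,
    ← Real.exp_mul, sub_eq_add_neg, Real.exp_add]
  field_simp

lemma expr_eq {B θ ν s : ℝ} (hB : 0 < B) (hθ : 0 < θ) (hν : 0 ≤ ν) (hs : 0 ≤ s) :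
    mixedBennettExpr B θ ν s = (∫ l in Set.Ioi (0 : ℝ), bennettW (θ / B ^ 2) l)⁻¹ *
      ∫ l in Set.Ioi (0 : ℝ), Real.exp (l * s / B) *
        Real.exp (-(ν / B ^ 2 * (Real.exp l - 1 - l))) * bennettW (θ / B ^ 2) l := by
  have ha : 0 < θ / B ^ 2 := by positivity
  have hv : 0 < (ν + θ) / B ^ 2 := by positivity
  have hk : 0 < (B * s + ν + θ) / B ^ 2 := by positivity
  unfold mixedBennettExpr upperGammaReg
  rw [mul_div_cancel₀ _ (Real.Gamma_pos_of_pos ha).ne', mul_div_cancel₀ _ (Real.Gamma_pos_of_pos hk).ne',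
    gamma_tail ha, gamma_tail hv]
  have e1 : ∫ l in Set.Ioi (0 : ℝ), Real.exp (θ / B ^ 2 * l - θ / B ^ 2 * Real.exp l) =
      ∫ l in Set.Ioi (0 : ℝ), bennettW (θ / B ^ 2) l := by
    simp only [bennettW, mul_sub]
  have e2 : (∫ l in Set.Ioi (0 : ℝ), Real.exp ((B * s + ν + θ) / B ^ 2 * l - (ν + θ) / B ^ 2 * Real.exp l))
      * Real.exp (ν / B ^ 2) = ∫ l in Set.Ioi (0 : ℝ), Real.exp (l * s / B) *
        Real.exp (-(ν / B ^ 2 * (Real.exp l - 1 - l))) * bennettW (θ / B ^ 2) l := by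
    rw [← integral_mul_const]
    congr 1
    ext l
    rw [bennettW, ← Real.exp_add, ← Real.exp_add, ← Real.exp_add]
    congr 1
    field_simp
    ring
  rw [e1, ← e2]
  have h1 := (Real.rpow_pos_of_pos ha (θ / B ^ 2)).ne'
  have h2 := (Real.rpow_pos_of_pos hv ((B * s + ν + θ) / B ^ 2)).ne'
  rw [mul_div_cancel_left₀ _ h2, ← div_div, div_self h1, one_div, mul_assoc]

lemma bennettW_cont (a : ℝ) : Continuous (bennettW a) := by
  unfold bennettW; fun_prop

lemma bennettW_int {a : ℝ} (ha : 0 < a) : IntegrableOn (bennettW a) (Set.Ioi 0) := by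
  refine (exp_neg_integrableOn_Ioi 0 ha).mono' (bennettW_cont a).aestronglyMeasurable ?_
  refine ae_of_all _ fun l => ?_
  rw [bennettW, Real.norm_eq_abs, Real.abs_exp]
  refine Real.exp_le_exp.mpr ?_
  have h : 2 * l ≤ Real.exp l := by
    have := Real.add_one_le_exp (l - 1)
    have h2 : Real.exp l = Real.exp (l - 1) * Real.exp 1 := by rw [← Real.exp_add]; ring_nf
    have h3 := Real.add_one_le_exp (1 : ℝ)
    have h4 := Real.exp_pos (l - 1)
    nlinarith
  nlinarith

lemma bennettW_pos {a : ℝ} (ha : 0 < a) : 0 < ∫ l in Set.Ioi (0 : ℝ), bennettW a l := by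
  rw [setIntegral_pos_iff_support_of_nonneg_ae (f := bennettW a) (ae_of_all _ fun l => (Real.exp_pos _).le) (bennettW_int ha)]
  have : Function.support (bennettW a) = Set.univ := by
    ext l; simp [bennettW]
  rw [this]; simp

lemma expr_lt {B θ ν s δ : ℝ} (hB : 0 < B) (hθ : 0 < θ) (hν : 0 ≤ ν) (hs : 0 ≤ s)
    (h : ∫⁻ l in Set.Ioi (0 : ℝ), ENNReal.ofReal (bennettL B l s ν * bennettW (θ / B ^ 2) l) <
      ENNReal.ofReal ((∫ l in Set.Ioi (0 : ℝ), bennettW (θ / B ^ 2) l) / δ)) :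
    mixedBennettExpr B θ ν s < 2 / δ := by
  have hN := bennettW_pos (a := θ / B ^ 2) (by positivity)
  rw [expr_eq hB hθ hν hs]
  set N := ∫ l in Set.Ioi (0 : ℝ), bennettW (θ / B ^ 2) l
  rw [inv_mul_lt_iff₀ hN, integral_eq_lintegral_of_nonneg_ae
    (ae_of_all _ fun l => by unfold bennettW; positivity)
    (by unfold bennettW; exact Continuous.aestronglyMeasurable (by fun_prop))]
  refine ENNReal.toReal_lt_of_lt_ofReal ?_
  have e : N * (2 / δ) = 2 * (N / δ) := by ring
  rw [e, ENNReal.ofReal_mul (by norm_num), ENNReal.ofReal_ofNat]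
  refine lt_of_le_of_lt ?_ ((ENNReal.mul_lt_mul_iff_right (a := 2) (by norm_num) (by norm_num)).mpr h)
  rw [← lintegral_const_mul' _ _ (by norm_num)]
  refine lintegral_mono fun l => ?_
  rw [← ENNReal.ofReal_ofNat, ← ENNReal.ofReal_mul (by norm_num)]
  refine ENNReal.ofReal_le_ofReal ?_
  unfold bennettL
  rw [← mul_assoc, ← mul_assoc]
  have : Real.exp (l * s / B) ≤ 2 * Real.cosh (l * s / B) := by
    rw [Real.cosh_eq]
    have := Real.exp_pos (-(l * s / B))
    linarith
  have h2 : 0 ≤ bennettW (θ / B ^ 2) l := (Real.exp_pos _).le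
  gcongr

lemma bennettL_pos (B l s ν : ℝ) : 0 < bennettL B l s ν :=
  mul_pos (Real.cosh_pos _) (Real.exp_pos _)

lemma bennettL_cont (B l : ℝ) : Continuous fun p : ℝ × ℝ => bennettL B l p.1 p.2 := by
  unfold bennettL
  exact (Real.continuous_cosh.comp (by fun_prop)).mul (by fun_prop)

lemma bennettLW_cont (B a : ℝ) :
    Continuous fun p : (ℝ × ℝ) × ℝ => bennettL B p.2 p.1.1 p.1.2 * bennettW a p.2 := by
  unfold bennettL bennettW
  exact ((Real.continuous_cosh.comp (by fun_prop)).mul (by fun_prop)).mul (by fun_prop)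

lemma bennett_step
    {H : Type*} [NormedAddCommGroup H] [InnerProductSpace ℝ H] [CompleteSpace H]
    {Ω : Type*} {m0 : MeasurableSpace Ω} {μ : Measure Ω} [IsProbabilityMeasure μ]
    (m : MeasurableSpace Ω) (hm : m ≤ m0) (M M' x : Ω → H) (P P' : Ω → H →L[ℝ] H) (e sg ν : Ω → ℝ)
    (B l K : ℝ) (hB : 0 < B) (hl : 0 ≤ l)
    (hM' : ∀ ω, M' ω = M ω + e ω • x ω)
    (hPle : ∀ ω y, ‖P' ω y‖ ≤ ‖P ω y‖) (hG : ∀ ω, ‖P' ω (x ω)‖ ≤ 1) (hν : ∀ ω, 0 ≤ ν ω)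
    (hm1 : StronglyMeasurable[m] fun ω => ‖P ω (M ω)‖)
    (hm2 : StronglyMeasurable[m] fun ω => ‖P' ω (M ω)‖)
    (hm3 : StronglyMeasurable[m] fun ω => ‖P' ω (x ω)‖)
    (hm4 : StronglyMeasurable[m] fun ω => inner ℝ (P' ω (M ω)) (P' ω (x ω)))
    (hm5 : StronglyMeasurable[m0] fun ω => ‖P' ω (M' ω)‖)
    (hsg : StronglyMeasurable[m] sg) (hνm : StronglyMeasurable[m] ν)
    (hbd : ∀ᵐ ω ∂μ, ‖P ω (M ω)‖ ≤ K)
    (he : Integrable e μ) (heB : ∀ᵐ ω ∂μ, |e ω| ≤ B)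
    (h0 : μ[e | m] =ᵐ[μ] 0) (hv : μ[fun ω => e ω ^ 2 | m] ≤ᵐ[μ] fun ω => sg ω ^ 2)
    {A : Set Ω} (hA : MeasurableSet[m] A) :
    ∫⁻ ω in A, ENNReal.ofReal (bennettL B l ‖P' ω (M' ω)‖ (ν ω + sg ω ^ 2 * ‖P' ω (x ω)‖ ^ 2)) ∂μ ≤
      ∫⁻ ω in A, ENNReal.ofReal (bennettL B l ‖P ω (M ω)‖ (ν ω)) ∂μ := by
  have hpsi := psi_nonneg' l
  set ψ := Real.exp l - 1 - l with hψ
  have hadd : ∀ ω, P' ω (M' ω) = P' ω (M ω) + e ω • P' ω (x ω) := by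
    intro ω; rw [hM']; simp
  set E : Ω → ℝ := fun ω => Real.exp (-((ν ω + sg ω ^ 2 * ‖P' ω (x ω)‖ ^ 2) / B ^ 2 * ψ)) with hE
  have hE0 : ∀ ω, 0 < E ω := fun ω => Real.exp_pos _
  have hE1 : ∀ ω, E ω ≤ 1 := by
    intro ω
    rw [hE]
    refine Real.exp_le_one_iff.mpr ?_
    have := hν ω
    rw [neg_nonpos]; positivity
  have hEm : StronglyMeasurable[m] E := by
    refine Real.continuous_exp.comp_stronglyMeasurable (StronglyMeasurable.neg ?_)
    have h1 : StronglyMeasurable[m] fun ω => ν ω + sg ω ^ 2 * ‖P' ω (x ω)‖ ^ 2 :=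
      hνm.add ((hsg.pow 2).mul (hm3.pow 2))
    simpa only [div_eq_mul_inv] using (h1.mul_const _).mul_const ψ
  have hrm : StronglyMeasurable[m] fun ω => l * ‖P' ω (M ω)‖ / B := by
    simpa only [div_eq_mul_inv] using (hm2.const_mul l).mul_const _
  have hcm : StronglyMeasurable[m] fun ω => Real.cosh (l * ‖P' ω (M ω)‖ / B) :=
    Real.continuous_cosh.comp_stronglyMeasurable hrm
  have hsm : StronglyMeasurable[m] fun ω => Real.sinh (l * ‖P' ω (M ω)‖ / B) :=
    Real.continuous_sinh.comp_stronglyMeasurable hrm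
  set C := Real.cosh (l * K / B) with hC
  have hC0 : 0 < C := Real.cosh_pos _
  have hcC : ∀ᵐ ω ∂μ, Real.cosh (l * ‖P' ω (M ω)‖ / B) ≤ C := by
    filter_upwards [hbd] with ω h
    have h1 := (hPle ω (M ω)).trans h
    rw [hC, Real.cosh_le_cosh, abs_of_nonneg (by positivity)]
    refine le_trans ?_ (le_abs_self _)
    gcongr
  have hpr : ∀ ω, |inner ℝ (P' ω (M ω)) (P' ω (x ω)) / ‖P' ω (M ω)‖| ≤ 1 := by
    intro ω
    rw [abs_div, abs_norm]
    apply div_le_of_le_mul₀ (norm_nonneg _) zero_le_one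
    refine (abs_real_inner_le_norm _ _).trans ?_
    rw [mul_comm]
    gcongr
    exact hG ω
  refine cond_step hm (a := fun ω => E ω * Real.cosh (l * ‖P' ω (M ω)‖ / B))
    (b := fun ω => E ω * (Real.sinh (l * ‖P' ω (M ω)‖ / B) *
      (l / B * (inner ℝ (P' ω (M ω)) (P' ω (x ω)) / ‖P' ω (M ω)‖))))
    (c := fun ω => E ω * (Real.cosh (l * ‖P' ω (M ω)‖ / B) * (‖P' ω (x ω)‖ ^ 2 / B ^ 2 * ψ)))
    (K := C * (1 + l / B + 1 / B ^ 2 * ψ)) (e := e) (s2 := fun ω => sg ω ^ 2) (B := B)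
    (hEm.mul hcm) ?_ ?_ ?_ ?_ ?_ ?_ he heB h0 hv ?_ ?_ (fun ω => (bennettL_pos _ _ _ _).le)
    (fun ω => (bennettL_pos _ _ _ _).le) ?_ ?_ hA
  · refine hEm.mul (hsm.mul (StronglyMeasurable.const_mul ?_ _))
    exact (hm4.measurable.div hm2.measurable).stronglyMeasurable
  · refine hEm.mul (hcm.mul ?_)
    have hsq : StronglyMeasurable[m] fun ω => ‖P' ω (x ω)‖ ^ 2 := hm3.pow 2
    simpa only [div_eq_mul_inv] using (hsq.mul_const _).mul_const ψ
  · filter_upwards [hcC] with ω h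
    have h1 := hE0 ω
    have h2 := Real.cosh_pos (l * ‖P' ω (M ω)‖ / B)
    rw [Real.norm_eq_abs, abs_of_nonneg (by positivity)]
    calc E ω * Real.cosh (l * ‖P' ω (M ω)‖ / B) ≤ 1 * C := by gcongr; exact hE1 ω
      _ = C * 1 := by ring
      _ ≤ C * (1 + l / B + 1 / B ^ 2 * ψ) := by
        gcongr
        have : 0 ≤ l / B := by positivity
        have : 0 ≤ 1 / B ^ 2 * ψ := by positivity
        linarith
  · filter_upwards [hcC] with ω h
    have h1 := hE0 ω
    have hr0 : 0 ≤ l * ‖P' ω (M ω)‖ / B := by positivity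
    have h2 : 0 ≤ Real.sinh (l * ‖P' ω (M ω)‖ / B) := Real.sinh_nonneg_iff.mpr hr0
    have h3 : Real.sinh (l * ‖P' ω (M ω)‖ / B) ≤ C := (Real.sinh_lt_cosh _).le.trans h
    have hlB : 0 ≤ l / B := by positivity
    rw [Real.norm_eq_abs, abs_mul, abs_mul, abs_mul, abs_of_pos h1, abs_of_nonneg h2, abs_of_nonneg hlB]
    calc _ ≤ 1 * (C * (l / B * 1)) := by gcongr; exacts [hE1 ω, hpr ω]
      _ = C * (l / B) := by ring
      _ ≤ C * (1 + l / B + 1 / B ^ 2 * ψ) := by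
        gcongr
        have : 0 ≤ 1 / B ^ 2 * ψ := by positivity
        linarith
  · filter_upwards [hcC] with ω h
    have h1 := hE0 ω
    have h2 := Real.cosh_pos (l * ‖P' ω (M ω)‖ / B)
    have h4 : ‖P' ω (x ω)‖ ^ 2 ≤ 1 := pow_le_one₀ (norm_nonneg _) (hG ω)
    rw [Real.norm_eq_abs, abs_of_nonneg (by positivity)]
    calc _ ≤ 1 * (C * (1 / B ^ 2 * ψ)) := by gcongr; exact hE1 ω
      _ = C * (1 / B ^ 2 * ψ) := by ring
      _ ≤ C * (1 + l / B + 1 / B ^ 2 * ψ) := by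
        gcongr
        have : 0 ≤ l / B := by positivity
        linarith
  · intro ω
    have h1 := hE0 ω
    have h2 := Real.cosh_pos (l * ‖P' ω (M ω)‖ / B)
    positivity
  · have hmm : StronglyMeasurable[m0] fun ω => ν ω + sg ω ^ 2 * ‖P' ω (x ω)‖ ^ 2 :=
      ((hνm.mono hm).add (((hsg.mono hm).pow 2).mul ((hm3.mono hm).pow 2)))
    refine Integrable.of_bound ((bennettL_cont B l).comp_stronglyMeasurable (hm5.prodMk hmm)).aestronglyMeasurable
      (Real.cosh (l * (K + B) / B)) ?_
    filter_upwards [hbd, heB] with ω h1 h2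
    have h3 : ‖P' ω (M' ω)‖ ≤ K + B := by
      rw [hadd]
      refine (norm_add_le _ _).trans ?_
      rw [norm_smul, Real.norm_eq_abs]
      have h4 := (hPle ω (M ω)).trans h1
      have h5 : |e ω| * ‖P' ω (x ω)‖ ≤ B * 1 := by gcongr; exact hG ω
      linarith
    have h0 := hE0 ω
    rw [Real.norm_eq_abs, abs_of_pos (bennettL_pos _ _ _ _), bennettL]
    have h6 : Real.cosh (l * ‖P' ω (M' ω)‖ / B) ≤ Real.cosh (l * (K + B) / B) := by
      rw [Real.cosh_le_cosh, abs_of_nonneg (by positivity)]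
      refine le_trans ?_ (le_abs_self _)
      gcongr
    calc _ ≤ Real.cosh (l * (K + B) / B) * 1 := by
          refine mul_le_mul h6 (hE1 ω) (hE0 ω).le (Real.cosh_pos _).le
      _ = _ := mul_one _
  · refine Integrable.of_bound ((bennettL_cont B l).comp_stronglyMeasurable ((hm1.mono hm).prodMk (hνm.mono hm))).aestronglyMeasurable
      C ?_
    filter_upwards [hbd] with ω h1
    rw [Real.norm_eq_abs, abs_of_pos (bennettL_pos _ _ _ _), bennettL]
    have h6 : Real.cosh (l * ‖P ω (M ω)‖ / B) ≤ C := by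
      rw [hC, Real.cosh_le_cosh, abs_of_nonneg (by positivity)]
      refine le_trans ?_ (le_abs_self _)
      gcongr
    calc _ ≤ C * 1 := by
          refine mul_le_mul h6 ?_ (Real.exp_pos _).le hC0.le
          refine Real.exp_le_one_iff.mpr ?_
          have := hν ω
          rw [neg_nonpos]; positivity
      _ = _ := mul_one _
  · filter_upwards [heB] with ω h
    have h1 := cosh_norm_step (P' ω (M ω)) (P' ω (x ω)) (e ω) B l hB hl h (hG ω)
    rw [← hψ] at h1
    have h2 := mul_le_mul_of_nonneg_right h1 (hE0 ω).le
    rw [bennettL, hadd]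
    refine h2.trans (le_of_eq ?_)
    ring
  · refine ae_of_all _ fun ω => ?_
    have h2 := Real.cosh_pos (l * ‖P' ω (M ω)‖ / B)
    set k := sg ω ^ 2 * ‖P' ω (x ω)‖ ^ 2 / B ^ 2 * ψ with hk
    have e1 : E ω = Real.exp (-(ν ω / B ^ 2 * ψ)) * Real.exp (-k) := by
      rw [hk, ← Real.exp_add]
      show Real.exp _ = _
      congr 1
      ring
    have h3 : Real.exp (-k) * (1 + k) ≤ 1 := by
      have := Real.add_one_le_exp k
      calc Real.exp (-k) * (1 + k) ≤ Real.exp (-k) * Real.exp k := by gcongr; linarith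
        _ = 1 := by rw [← Real.exp_add]; simp
    have h6 : Real.cosh (l * ‖P' ω (M ω)‖ / B) ≤ Real.cosh (l * ‖P ω (M ω)‖ / B) := by
      rw [Real.cosh_le_cosh, abs_of_nonneg (by positivity), abs_of_nonneg (by positivity)]
      gcongr
      exact hPle ω _
    calc _ = Real.cosh (l * ‖P' ω (M ω)‖ / B) * Real.exp (-(ν ω / B ^ 2 * ψ)) * (Real.exp (-k) * (1 + k)) := by
          rw [e1, hk]; ring
      _ ≤ Real.cosh (l * ‖P' ω (M ω)‖ / B) * Real.exp (-(ν ω / B ^ 2 * ψ)) * 1 := by gcongr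
      _ ≤ bennettL B l ‖P ω (M ω)‖ (ν ω) := by
          rw [mul_one, bennettL]
          gcongr


lemma mixture_ville {Ω : Type*} {m0 : MeasurableSpace Ω} {μ : Measure Ω} [IsProbabilityMeasure μ]
    (ℱ : Filtration ℕ m0) (s ν : ℕ → Ω → ℝ) (B a δ : ℝ) (ha0 : 0 < a) (hδ0 : 0 < δ)
    (hsm : ∀ n, StronglyMeasurable[ℱ n] (s n)) (hνm : ∀ n, StronglyMeasurable[ℱ n] (ν n))
    (hs0 : ∀ ω, s 0 ω = 0) (hν0 : ∀ ω, ν 0 ω = 0)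
    (hone : ∀ l : ℝ, 0 ≤ l → ∀ n A, MeasurableSet[ℱ n] A →
      ∫⁻ ω in A, ENNReal.ofReal (bennettL B l (s (n + 1) ω) (ν (n + 1) ω)) ∂μ ≤
      ∫⁻ ω in A, ENNReal.ofReal (bennettL B l (s n ω) (ν n ω)) ∂μ) :
    ENNReal.ofReal (1 - δ) ≤ μ {ω | ∀ n, ∫⁻ l in Set.Ioi (0 : ℝ),
      ENNReal.ofReal (bennettL B l (s n ω) (ν n ω) * bennettW a l) <
      ENNReal.ofReal ((∫ l in Set.Ioi (0 : ℝ), bennettW a l) / δ)} := by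
  have hN : 0 < ∫ l in Set.Ioi (0 : ℝ), bennettW a l := bennettW_pos ha0
  -- mixture
  have hjoint : Measurable fun p : (ℝ × ℝ) × ℝ =>
      ENNReal.ofReal (bennettL B p.2 p.1.1 p.1.2 * bennettW a p.2) :=
    ENNReal.measurable_ofReal.comp (bennettLW_cont B a).measurable
  have hgm : Measurable fun p : ℝ × ℝ =>
      ∫⁻ l in Set.Ioi (0 : ℝ), ENNReal.ofReal (bennettL B l p.1 p.2 * bennettW a l) :=
    hjoint.lintegral_prod_right'
  set Z : ℕ → Ω → ENNReal := fun n ω => ∫⁻ l in Set.Ioi (0 : ℝ),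
    ENNReal.ofReal (bennettL B l (s n ω) (ν n ω) * bennettW a l) with hZ
  have hZm : ∀ n, Measurable[ℱ n] (Z n) := by
    intro n
    have h1 := (hsm n).measurable.prodMk (hνm n).measurable
    have h2 := hgm.comp h1
    simpa only [Function.comp_def] using h2
  have hZstep : ∀ n A, MeasurableSet[ℱ n] A →
      ∫⁻ ω in A, Z (n + 1) ω ∂μ ≤ ∫⁻ ω in A, Z n ω ∂μ := by
    intro n A hA
    have hj : ∀ k, Measurable (Function.uncurry fun (ω : Ω) (l : ℝ) =>
        ENNReal.ofReal (bennettL B l (s k ω) (ν k ω) * bennettW a l)) := by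
      intro k
      have h1 : Measurable fun p : Ω × ℝ => ((s k p.1, ν k p.1), p.2) :=
        ((((hsm k).mono (ℱ.le k)).measurable.comp measurable_fst).prodMk
          (((hνm k).mono (ℱ.le k)).measurable.comp measurable_fst)).prodMk measurable_snd
      have h2 := hjoint.comp h1
      simpa only [Function.comp_def, Function.uncurry_def] using h2
    simp only [hZ]
    rw [lintegral_lintegral_swap (hj (n + 1)).aemeasurable, lintegral_lintegral_swap (hj n).aemeasurable]
    refine setLIntegral_mono' measurableSet_Ioi fun l hl => ?_
    simp only [ENNReal.ofReal_mul (bennettL_pos _ _ _ _).le]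
    rw [lintegral_mul_const' _ _ ENNReal.ofReal_ne_top, lintegral_mul_const' _ _ ENNReal.ofReal_ne_top]
    gcongr ?_ * _
    exact hone l (le_of_lt hl) n A hA
  obtain ⟨N, hNdef⟩ : ∃ N, N = ∫ l in Set.Ioi (0 : ℝ), bennettW a l := ⟨_, rfl⟩
  rw [← hNdef] at hN ⊢
  have hZ0 : ∫⁻ ω, Z 0 ω ∂μ = ENNReal.ofReal N := by
    have : ∀ ω, Z 0 ω = ENNReal.ofReal N := by
      intro ω
      rw [hNdef, ofReal_integral_eq_lintegral_ofReal (bennettW_int ha0)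
        (ae_of_all _ fun l => (Real.exp_pos _).le)]
      simp [hZ, hs0, hν0, bennettL]
    simp [this]
  have hville := ville_aux ℱ Z hZm hZstep (ENNReal.ofReal (N / δ))
  rw [hZ0] at hville
  have hbadm : MeasurableSet {ω | ∃ n, ENNReal.ofReal (N / δ) ≤ Z n ω} := by
    have : {ω | ∃ n, ENNReal.ofReal (N / δ) ≤ Z n ω} = ⋃ n, {ω | ENNReal.ofReal (N / δ) ≤ Z n ω} := by
      ext; simp
    rw [this]
    exact MeasurableSet.iUnion fun n => ℱ.le n _ (hZm n measurableSet_Ici)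
  have hbad : μ {ω | ∃ n, ENNReal.ofReal (N / δ) ≤ Z n ω} ≤ ENNReal.ofReal δ := by
    have hpos : 0 < N / δ := by positivity
    have e : ENNReal.ofReal N = ENNReal.ofReal (N / δ) * ENNReal.ofReal δ := by
      rw [← ENNReal.ofReal_mul hpos.le]
      congr 1
      field_simp
    rw [e] at hville
    exact (ENNReal.mul_le_mul_iff_right (by simpa using hpos) ENNReal.ofReal_ne_top).mp hville
  have hgood : {ω | ∃ n, ENNReal.ofReal (N / δ) ≤ Z n ω}ᶜ ⊆
      {ω | ∀ n, Z n ω < ENNReal.ofReal (N / δ)} := by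
    intro ω hω n
    by_contra h
    exact hω ⟨n, not_lt.mp h⟩
  refine le_trans ?_ (measure_mono hgood)
  rw [prob_compl_eq_one_sub hbadm, ENNReal.ofReal_sub _ hδ0.le, ENNReal.ofReal_one]
  exact tsub_le_tsub_left hbad 1

theorem stmt_7
    {H : Type*} [NormedAddCommGroup H] [InnerProductSpace ℝ H] [CompleteSpace H]
    [SecondCountableTopology H]
    {Ω : Type*} {m0 : MeasurableSpace Ω} {μ : Measure Ω} [IsProbabilityMeasure μ]
    (ℱ : Filtration ℕ m0)
    (X : ℕ → Ω → H) (ε : ℕ → Ω → ℝ)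
    (hX : ∀ t, 1 ≤ t → StronglyMeasurable[ℱ (t - 1)] (X t))
    (hεmeas : ∀ t, 1 ≤ t → StronglyMeasurable[ℱ t] (ε t))
    (hεint : ∀ t, 1 ≤ t → Integrable (ε t) μ)
    (hε0 : ∀ t, 1 ≤ t → μ[ε t | ℱ (t - 1)] =ᵐ[μ] 0)
    (ρ : ℝ) (hρ : 0 < ρ)
    (Q Qinv : ℕ → Ω → H →L[ℝ] H)
    (hQpos : ∀ t ω, (Q t ω).IsPositive)
    (hQsq : ∀ t ω, Q t ω ∘L Q t ω =
      ρ • (1 : H →L[ℝ] H) + ∑ i ∈ Finset.Icc 1 t, outerProd (X i ω))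
    (hQinv : ∀ t ω, Qinv t ω ∘L Q t ω = 1 ∧ Q t ω ∘L Qinv t ω = 1)
    (B : ℝ) (hB : 0 < B) (σ : ℕ → Ω → ℝ)
    (hσmeas : ∀ t, 1 ≤ t → StronglyMeasurable[ℱ (t - 1)] (σ t))
    (hbdd : ∀ t, 1 ≤ t → ∀ᵐ ω ∂μ, |ε t ω| ≤ B)
    (hvar : ∀ t, 1 ≤ t →
      μ[fun ω => (ε t ω - (μ[ε t | ℱ (t - 1)]) ω) ^ 2 | ℱ (t - 1)] ≤ᵐ[μ]
        fun ω => σ t ω ^ 2)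
    (θ : ℝ) (hθ : 0 < θ) (δ : ℝ) (hδ : δ ∈ Set.Ioo (0 : ℝ) 1) :
    ENNReal.ofReal (1 - δ) ≤
      μ {ω | ∀ t, 1 ≤ t →
        mixedBennettExpr B θ
          (∑ i ∈ Finset.Icc 1 t, σ i ω ^ 2 * ‖Qinv i ω (X i ω)‖ ^ 2)
          ‖Qinv t ω (∑ i ∈ Finset.Icc 1 t, ε i ω • X i ω)‖ < 2 / δ} := by
  set M : ℕ → Ω → H := fun t ω => ∑ i ∈ Finset.Icc 1 t, ε i ω • X i ω with hM
  set ν : ℕ → Ω → ℝ := fun t ω => ∑ i ∈ Finset.Icc 1 t, σ i ω ^ 2 * ‖Qinv i ω (X i ω)‖ ^ 2 with hν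
  set a := θ / B ^ 2 with ha
  have ha0 : 0 < a := by positivity
  have hMsucc : ∀ n ω, M (n + 1) ω = M n ω + ε (n + 1) ω • X (n + 1) ω := by
    intro n ω
    simp only [hM]
    rw [Finset.sum_Icc_succ_top (by omega)]
  have hνsucc : ∀ n ω, ν (n + 1) ω = ν n ω + σ (n + 1) ω ^ 2 * ‖Qinv (n + 1) ω (X (n + 1) ω)‖ ^ 2 := by
    intro n ω
    simp only [hν]
    rw [Finset.sum_Icc_succ_top (by omega)]
  have hν0 : ∀ n ω, 0 ≤ ν n ω := fun n ω => Finset.sum_nonneg fun i _ => by positivity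
  have hPle : ∀ n ω y, ‖Qinv (n + 1) ω y‖ ≤ ‖Qinv n ω y‖ := fun n ω y =>
    norm_P_succ_le (fun t => hQpos t ω) (fun t => hQsq t ω) (fun t => hQinv t ω) n y
  have hG : ∀ n ω, ‖Qinv (n + 1) ω (X (n + 1) ω)‖ ≤ 1 := fun n ω =>
    norm_G_le (fun t => hQpos t ω) (fun t => hQsq t ω) (fun t => hQinv t ω) n
  -- measurability
  have hXm : ∀ n i, 1 ≤ i → i ≤ n + 1 → StronglyMeasurable[ℱ n] (X i) := fun n i h1 h2 =>
    (hX i h1).mono (ℱ.mono (by omega))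
  have hMm : ∀ n, StronglyMeasurable[ℱ n] (M n) := by
    intro n
    refine Finset.stronglyMeasurable_fun_sum _ fun i hi => ?_
    obtain ⟨h1, h2⟩ := Finset.mem_Icc.mp hi
    exact ((hεmeas i h1).mono (ℱ.mono h2)).smul (hXm n i h1 (by omega))
  have hGm : ∀ n i, 1 ≤ i → i ≤ n + 1 → StronglyMeasurable[ℱ n] fun ω => ‖Qinv i ω (X i ω)‖ :=
    fun n i h1 h2 => P_norm_meas hρ hQpos hQsq hQinv (ℱ n) i
      (fun j hj1 hj2 => hXm n j hj1 (by omega)) _ (hXm n i h1 h2)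
  have hνm : ∀ n, StronglyMeasurable[ℱ n] (ν n) := by
    intro n
    refine Finset.stronglyMeasurable_fun_sum _ fun i hi => ?_
    obtain ⟨h1, h2⟩ := Finset.mem_Icc.mp hi
    exact (((hσmeas i h1).mono (ℱ.mono (by omega))).pow 2).mul ((hGm n i h1 (by omega)).pow 2)
  have hsm : ∀ n, StronglyMeasurable[ℱ n] fun ω => ‖Qinv n ω (M n ω)‖ := fun n =>
    P_norm_meas hρ hQpos hQsq hQinv (ℱ n) n (fun j hj1 hj2 => hXm n j hj1 (by omega)) _ (hMm n)
  -- boundedness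
  have hbd : ∀ n : ℕ, ∀ᵐ ω ∂μ, ‖Qinv n ω (M n ω)‖ ≤ n * B := by
    intro n
    induction n with
    | zero => exact ae_of_all _ fun ω => by simp [hM]
    | succ n ih =>
      filter_upwards [ih, hbdd (n + 1) (by omega)] with ω h1 h2
      rw [hMsucc, map_add, map_smul]
      refine (norm_add_le _ _).trans ?_
      rw [norm_smul, Real.norm_eq_abs]
      have h4 := (hPle n ω (M n ω)).trans h1
      have h5 : |ε (n + 1) ω| * ‖Qinv (n + 1) ω (X (n + 1) ω)‖ ≤ B * 1 := by gcongr; exact hG n ω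
      push_cast
      linarith
  -- one step
  have hone : ∀ l : ℝ, 0 ≤ l → ∀ n A, MeasurableSet[ℱ n] A →
      ∫⁻ ω in A, ENNReal.ofReal (bennettL B l ‖Qinv (n + 1) ω (M (n + 1) ω)‖ (ν (n + 1) ω)) ∂μ ≤
      ∫⁻ ω in A, ENNReal.ofReal (bennettL B l ‖Qinv n ω (M n ω)‖ (ν n ω)) ∂μ := by
    intro l hl n A hA
    have h0 := hε0 (n + 1) (by omega)
    have hv := hvar (n + 1) (by omega)
    simp only [Nat.add_sub_cancel] at h0 hv
    have hv2 : μ[fun ω => ε (n + 1) ω ^ 2 | ℱ n] ≤ᵐ[μ] fun ω => σ (n + 1) ω ^ 2 := by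
      refine EventuallyLE.trans (EventuallyEq.le (condExp_congr_ae ?_)) hv
      filter_upwards [h0] with ω h
      rw [h]; simp
    simp only [hνsucc]
    exact bennett_step (ℱ n) (ℱ.le n) (M n) (M (n + 1)) (X (n + 1)) (Qinv n) (Qinv (n + 1))
      (ε (n + 1)) (σ (n + 1)) (ν n) B l (n * B) hB hl (hMsucc n) (hPle n) (hG n) (hν0 n)
      (hsm n)
      (P_norm_meas hρ hQpos hQsq hQinv (ℱ n) (n + 1) (hXm n) _ (hMm n))
      (hGm n (n + 1) (by omega) le_rfl)
      (P_inner_meas hρ hQpos hQsq hQinv (ℱ n) (n + 1) (hXm n) _ _ (hMm n)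
        (hXm n (n + 1) (by omega) le_rfl))
      ((hsm (n + 1)).mono (ℱ.le _))
      (hσmeas (n + 1) (by omega)) (hνm n) (hbd n) (hεint (n + 1) (by omega))
      (hbdd (n + 1) (by omega)) h0 hv2 hA
  have key := mixture_ville ℱ (fun n ω => ‖Qinv n ω (M n ω)‖) ν B a δ ha0 hδ.1 hsm hνm
    (fun ω => by simp [hM]) (fun ω => by simp [hν]) hone
  refine key.trans (measure_mono ?_)
  intro ω hω t _
  exact expr_lt hB hθ (hν0 t ω) (norm_nonneg _) (hω t)
end
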